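/- arXiv:2203.13578 — 4 statements merged into one kernel-verified Lean document; each statement's English description precedes it below -/
import Mathlib

section
/- For every N ≥ 0 the polynomials Q_{n,N} satisfy: (i) Q_{N+1,N} = Q_{N+2,N} = ⋯ = Q_{N+p−1,N} = 0; (ii) Q_{N,N} = h_N^{−1}·B_N and Q_{N+p,N} = (−1)^{p−1}·h_{N+1}^{−1}·B_{N+1}; (iii) the row vector Q^{⟨N⟩} := (Q_{0,N}, …, Q_{N,N}) satisfies the polynomial identity Q^{⟨N⟩}(x)·T^{[N]} + (0, …, 0, T_{N+p,N}·Q_{N+p,N}(x)) = x·Q^{⟨N⟩}(x). -/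
open Polynomial

noncomputable def Qp (p : ℕ) (A : Fin p → ℕ → Polynomial ℝ) (n N : ℕ) : Polynomial ℝ :=
  Matrix.det (Matrix.of fun i a : Fin p =>
    if (i : ℕ) = 0 then A a n else A a (N + (i : ℕ)))

noncomputable def truncM (T : ℕ → ℕ → ℝ) (N : ℕ) : Matrix (Fin (N + 1)) (Fin (N + 1)) ℝ :=
  Matrix.of fun i j : Fin (N + 1) => T (i : ℕ) (j : ℕ)

section Determinant

theorem Qp_eq_sum_cofactor (q : ℕ) (A : Fin (q + 1) → ℕ → ℝ[X]) (N : ℕ) :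
    ∃ c : Fin (q + 1) → ℝ[X], ∀ n, Qp (q + 1) A n N = ∑ a, A a n * c a := by
  refine ⟨fun a => (-1) ^ (a : ℕ) * (Matrix.of fun (i : Fin q) (b : Fin q) =>
    A (a.succAbove b) (N + (i + 1))).det, fun n => ?_⟩
  rw [Qp, Matrix.det_succ_row_zero]
  refine Finset.sum_congr rfl fun a _ => ?_
  have hsub : ((Matrix.of fun i a : Fin (q + 1) =>
      if (i : ℕ) = 0 then A a n else A a (N + (i : ℕ))).submatrix Fin.succ a.succAbove)
      = Matrix.of fun (i : Fin q) (b : Fin q) => A (a.succAbove b) (N + (i + 1)) := by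
    ext1 i b
    simp
  rw [hsub]
  simp only [Matrix.of_apply, Fin.val_zero, if_true]
  ring

theorem Qp_add_eq_zero (p : ℕ) (A : Fin p → ℕ → ℝ[X]) (N i : ℕ) (hi : 1 ≤ i) (hip : i < p) :
    Qp p A (N + i) N = 0 := by
  refine Matrix.det_zero_of_row_eq (i := (⟨0, by omega⟩ : Fin p)) (j := ⟨i, hip⟩) ?_ ?_
  · simp only [ne_eq, Fin.mk.injEq]
    omega
  · funext a
    have : i ≠ 0 := by omega
    simp [this]

theorem Qp_self (p : ℕ) (A : Fin p → ℕ → ℝ[X]) (N : ℕ) :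
    Qp p A N N = Matrix.det (Matrix.of fun i a : Fin p => A a (N + (i : ℕ))) := by
  rw [Qp]
  congr 1
  ext1 i a
  by_cases hi : (i : ℕ) = 0 <;> simp [hi]

theorem Qp_add_self (q : ℕ) (A : Fin (q + 1) → ℕ → ℝ[X]) (N : ℕ) :
    Qp (q + 1) A (N + (q + 1)) N = (-1) ^ q * Qp (q + 1) A (N + 1) (N + 1) := by
  have hperm : (Matrix.of fun i a : Fin (q + 1) => A a (N + 1 + (i : ℕ)))
      = (Matrix.of fun i a : Fin (q + 1) =>
        if (i : ℕ) = 0 then A a (N + (q + 1)) else A a (N + (i : ℕ))).submatrix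
          (finRotate (q + 1)) id := by
    ext1 i a
    simp only [Matrix.of_apply, Matrix.submatrix_apply, id_eq, coe_finRotate]
    split_ifs with hi <;> simp_all [add_assoc, add_comm 1]
  have hsq : ((-1 : ℝ[X]) ^ q) * (-1) ^ q = 1 := by rw [← mul_pow]; simp
  rw [Qp_self, hperm, Matrix.det_permute, sign_finRotate, Qp]
  simp [← mul_assoc, hsq]

theorem Qp_zero_zero (p : ℕ) (A : Fin p → ℕ → ℝ[X])
    (hAzero : ∀ a : Fin p, ∀ j : ℕ, j < (a : ℕ) → A a j = 0)
    (hAone : ∀ a : Fin p, A a (a : ℕ) = 1) : Qp p A 0 0 = 1 := by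
  rw [Qp_self, Matrix.det_of_isLowerTriangular]
  · simp [hAone]
  · intro i j hij
    have hij' : (i : ℕ) < j := hij
    simpa using hAzero j i hij'

end Determinant

section Recurrence

variable {p : ℕ} {T : ℕ → ℕ → ℝ}

theorem sum_column_eq (hT1 : ∀ n, T n (n + 1) = 1) (hTsup : ∀ n m, n + 1 < m → T n m = 0)
    (f : ℕ → ℝ[X]) (n : ℕ) :
    ∑ m ∈ Finset.range (n + (p + 1)), C (T m n) * f m
      = (if n = 0 then 0 else f (n - 1))
        + ∑ i ∈ Finset.range (p + 1), C (T (n + i) n) * f (n + i) := by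
  rw [Finset.sum_range_add]
  congr 1
  cases n with
  | zero => simp
  | succ k =>
    rw [Finset.sum_range_succ, Finset.sum_eq_zero]
    · simp [hT1]
    · intro m hm
      rw [hTsup m (k + 1) (by have := Finset.mem_range.mp hm; omega)]
      simp

theorem sum_column_Qp {q : ℕ} (hT1 : ∀ n, T n (n + 1) = 1)
    (hTsup : ∀ n m, n + 1 < m → T n m = 0)
    (hTsub : ∀ n m, m + (q + 1) < n → T n m = 0) (A : Fin (q + 1) → ℕ → ℝ[X])
    (hArec : ∀ a : Fin (q + 1), ∀ n : ℕ,
      (if n = 0 then 0 else A a (n - 1))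
        + ∑ i ∈ Finset.range (q + 1 + 1), C (T (n + i) n) * A a (n + i) = X * A a n)
    (N j : ℕ) (hj : j ≤ N) :
    ∑ i ∈ Finset.range (N + 1), C (T i j) * Qp (q + 1) A i N
      + (if j = N then C (T (N + (q + 1)) N) * Qp (q + 1) A (N + (q + 1)) N else 0)
      = X * Qp (q + 1) A j N := by
  have hrec : ∑ m ∈ Finset.range (j + (q + 1 + 1)), C (T m j) * Qp (q + 1) A m N
      = X * Qp (q + 1) A j N := by
    obtain ⟨c, hc⟩ := Qp_eq_sum_cofactor q A N
    simp only [hc, Finset.mul_sum]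
    rw [Finset.sum_comm]
    refine Finset.sum_congr rfl fun a _ => ?_
    rw [← mul_assoc, ← hArec a j, ← sum_column_eq hT1 hTsup (A a) j, Finset.sum_mul]
    exact Finset.sum_congr rfl fun m _ => by ring
  have hext : ∑ m ∈ Finset.range (j + (q + 1 + 1)), C (T m j) * Qp (q + 1) A m N
      = ∑ m ∈ Finset.range (N + 1 + (q + 1)), C (T m j) * Qp (q + 1) A m N := by
    refine Finset.sum_subset (Finset.range_mono (by omega)) fun m _ hm => ?_
    rw [hTsub m j (by have := Finset.mem_range.not.mp hm; omega)]
    simp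
  rw [← hrec, hext, Finset.sum_range_add _ (N + 1), Finset.sum_range_succ _ q,
    Finset.sum_eq_zero (s := Finset.range q), zero_add]
  · congr 1
    have hidx : N + 1 + q = N + (q + 1) := by omega
    rw [hidx]
    split_ifs with hjN
    · rw [hjN]
    · rw [hTsub (N + (q + 1)) j (by omega)]
      simp
  · intro i hi
    have hi' := Finset.mem_range.mp hi
    rw [show N + 1 + i = N + (1 + i) by omega,
      Qp_add_eq_zero (q + 1) A N (1 + i) (by omega) (by omega), mul_zero]

theorem sum_row_eq (hTsub : ∀ n m, m + p < n → T n m = 0) (f : ℕ → ℝ[X]) (n : ℕ) :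
    ∑ m ∈ Finset.range (n + 1), C (T n m) * f m
      = C (T n n) * f n
        + ∑ j ∈ Finset.Icc 1 p, (if j ≤ n then C (T n (n - j)) * f (n - j) else 0) := by
  let g : ℕ → ℝ[X] := fun j => if j ≤ n then C (T n (n - j)) * f (n - j) else 0
  have hleft : ∑ m ∈ Finset.range (n + 1), C (T n m) * f m
      = ∑ j ∈ Finset.range (n + p + 1), g j := by
    rw [← Finset.sum_range_reflect]
    refine (Finset.sum_congr rfl fun j hj => ?_).trans
      (Finset.sum_subset (Finset.range_mono (by omega : n + 1 ≤ n + p + 1)) fun j _ hj => ?_)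
    · have hj' : j ≤ n := Nat.lt_succ_iff.mp (Finset.mem_range.mp hj)
      simp [g, hj']
    · have hj' : ¬ j ≤ n := fun hle => hj (Finset.mem_range.mpr (by omega))
      simp [g, hj']
  have hright : ∑ j ∈ Finset.range (p + 1), g j = ∑ j ∈ Finset.range (n + p + 1), g j := by
    refine Finset.sum_subset (Finset.range_mono (by omega)) fun j _ hj => ?_
    have hj' : p < j := by have := Finset.mem_range.not.mp hj; omega
    by_cases hjn : j ≤ n
    · simp [g, hjn, hTsub n (n - j) (by omega)]
    · simp [g, hjn]
  rw [hleft, ← hright, Finset.sum_range_succ', add_comm]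
  congr 1
  rw [← Finset.Ico_add_one_right_eq_Icc, Finset.sum_Ico_eq_sum_range, Nat.add_sub_cancel]
  exact Finset.sum_congr rfl fun k _ => by rw [add_comm]

theorem sum_row_B (hT1 : ∀ n, T n (n + 1) = 1) (hTsup : ∀ n m, n + 1 < m → T n m = 0)
    (hTsub : ∀ n m, m + p < n → T n m = 0) (B : ℕ → ℝ[X])
    (hBrec : ∀ n, B (n + 1) = (X - C (T n n)) * B n
      - ∑ j ∈ Finset.Icc 1 p, (if j ≤ n then C (T n (n - j)) * B (n - j) else 0))
    (N n : ℕ) (hn : n ≤ N) :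
    ∑ m ∈ Finset.range (N + 1), C (T n m) * B m + (if n = N then B (N + 1) else 0)
      = X * B n := by
  have hrow : ∑ m ∈ Finset.range (n + 1), C (T n m) * B m + B (n + 1) = X * B n := by
    rw [sum_row_eq hTsub, hBrec n]
    ring
  split_ifs with hnN
  · rw [← hnN, hrow]
  · rw [← hrow, add_zero, ← Finset.sum_subset (Finset.range_mono (by omega : n + 2 ≤ N + 1)),
      Finset.sum_range_succ, hT1, C_1, one_mul]
    intro m _ hm
    rw [hTsup n m (by have := Finset.mem_range.not.mp hm; omega)]
    simp

/-- Pairing a truncated left eigenvector with a truncated right eigenvector equates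
their boundary terms. -/
theorem boundary_terms_eq (N : ℕ) (u v : ℕ → ℝ[X]) (r s x : ℝ[X])
    (hu : ∀ j ≤ N, ∑ i ∈ Finset.range (N + 1), C (T i j) * u i + (if j = N then r else 0)
      = x * u j)
    (hv : ∀ i ≤ N, ∑ j ∈ Finset.range (N + 1), C (T i j) * v j + (if i = N then s else 0)
      = x * v i) :
    u N * s = r * v N := by
  have hu' : ∑ j ∈ Finset.range (N + 1), x * u j * v j
      = ∑ j ∈ Finset.range (N + 1), ∑ i ∈ Finset.range (N + 1), C (T i j) * u i * v j
        + r * v N := by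
    rw [Finset.sum_congr rfl fun j hj => by
      rw [← hu j (Nat.lt_succ_iff.mp (Finset.mem_range.mp hj)), add_mul, Finset.sum_mul]]
    rw [Finset.sum_add_distrib]
    simp [ite_mul]
  have hv' : ∑ i ∈ Finset.range (N + 1), x * u i * v i
      = ∑ i ∈ Finset.range (N + 1), ∑ j ∈ Finset.range (N + 1), C (T i j) * u i * v j
        + u N * s := by
    rw [Finset.sum_congr rfl fun i hi => by
      rw [mul_right_comm, ← hv i (Nat.lt_succ_iff.mp (Finset.mem_range.mp hi)), add_mul,
        Finset.sum_mul, Finset.sum_congr rfl fun j _ => mul_right_comm _ (v j) (u i)]]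
    rw [Finset.sum_add_distrib]
    simp [ite_mul, mul_comm s]
  rw [hu', Finset.sum_comm] at hv'
  exact (add_left_cancel hv').symm

theorem B_monic (B : ℕ → ℝ[X]) (hB0 : B 0 = 1)
    (hBrec : ∀ n, B (n + 1) = (X - C (T n n)) * B n
      - ∑ j ∈ Finset.Icc 1 p, (if j ≤ n then C (T n (n - j)) * B (n - j) else 0)) (n : ℕ) :
    (B n).Monic ∧ (B n).natDegree = n := by
  induction n using Nat.strong_induction_on with
  | _ n ih =>
    cases n with
    | zero => simp [hB0]
    | succ k =>
      obtain ⟨hmonic, hdeg⟩ := ih k (by omega)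
      have hlead : ((X - C (T k k)) * B k).Monic := (monic_X_sub_C _).mul hmonic
      have hleaddeg : ((X - C (T k k)) * B k).natDegree = k + 1 := by
        rw [(monic_X_sub_C _).natDegree_mul hmonic, natDegree_X_sub_C, hdeg, add_comm]
      have hrest : (∑ j ∈ Finset.Icc 1 p,
          (if j ≤ k then C (T k (k - j)) * B (k - j) else 0)).degree
          < ((X - C (T k k)) * B k).degree := by
        rw [degree_eq_natDegree hlead.ne_zero, hleaddeg]
        refine lt_of_le_of_lt (degree_sum_le _ _) ?_
        rw [Finset.sup_lt_iff (WithBot.bot_lt_coe _)]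
        intro j _
        split_ifs
        · refine lt_of_le_of_lt degree_le_natDegree
            (WithBot.coe_lt_coe.mpr (lt_of_le_of_lt (natDegree_C_mul_le _ _) ?_))
          rw [(ih (k - j) (by omega)).2]
          exact Nat.lt_succ_of_le (Nat.sub_le k j)
        · simp
      rw [hBrec k]
      exact ⟨hlead.sub_of_left hrest, by
        rw [natDegree_eq_of_degree_eq (degree_sub_eq_left_of_degree_lt hrest), hleaddeg]⟩

end Recurrence

theorem stmt_3
    (p : ℕ) (hp : 1 ≤ p)
    (T : ℕ → ℕ → ℝ)
    (hT1 : ∀ n, T n (n + 1) = 1)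
    (hTsup : ∀ n m, n + 1 < m → T n m = 0)
    (hTsub : ∀ n m, m + p < n → T n m = 0)
    (hTlow : ∀ n, p ≤ n → T n (n - p) ≠ 0)
    (B : ℕ → Polynomial ℝ)
    (hB0 : B 0 = 1)
    (hBrec : ∀ n, B (n + 1) = (X - C (T n n)) * B n
      - ∑ j ∈ Finset.Icc 1 p, (if j ≤ n then C (T n (n - j)) * B (n - j) else 0))
    (A : Fin p → ℕ → Polynomial ℝ)
    (hAconst : ∀ a : Fin p, ∀ j < p, ∃ c : ℝ, A a j = C c)
    (hAzero : ∀ a : Fin p, ∀ j : ℕ, j < (a : ℕ) → A a j = 0)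
    (hAone : ∀ a : Fin p, A a (a : ℕ) = 1)
    (hArec : ∀ a : Fin p, ∀ n : ℕ,
      (if n = 0 then 0 else A a (n - 1))
        + ∑ i ∈ Finset.range (p + 1), C (T (n + i) n) * A a (n + i) = X * A a n)
    (h : ℕ → ℝ)
    (hh : ∀ n, h n = (-1 : ℝ) ^ ((p - 1) * n) * ∏ i ∈ Finset.range n, T (i + p) i) :
    ∀ N : ℕ,
      (∀ i : ℕ, 1 ≤ i → i ≤ p - 1 → Qp p A (N + i) N = 0) ∧
      (Qp p A N N = C (h N)⁻¹ * B N) ∧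
      (Qp p A (N + p) N = C ((-1 : ℝ) ^ (p - 1) * (h (N + 1))⁻¹) * B (N + 1)) ∧
      (∀ j : Fin (N + 1),
        (∑ i : Fin (N + 1), Qp p A (i : ℕ) N * C (truncM T N i j))
          + (if (j : ℕ) = N then C (T (N + p) N) * Qp p A (N + p) N else 0)
          = X * Qp p A (j : ℕ) N) := by
  obtain ⟨q, rfl⟩ : ∃ q, p = q + 1 := ⟨p - 1, by omega⟩
  have hcol := sum_column_Qp hT1 hTsup hTsub A hArec
  have hne : ∀ n, T (n + (q + 1)) n ≠ 0 := fun n => by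
    simpa using hTlow (n + (q + 1)) (by omega)
  have hh0 : ∀ n, h n ≠ 0 := fun n => by
    rw [hh]
    exact mul_ne_zero (pow_ne_zero _ (by norm_num)) (Finset.prod_ne_zero_iff.mpr fun i _ => hne i)
  have hsucc : ∀ n, h (n + 1) = (-1) ^ q * T (n + (q + 1)) n * h n := fun n => by
    rw [hh, hh, Finset.prod_range_succ, Nat.add_sub_cancel, mul_add, pow_add, mul_one]
    ring
  have hdiag : ∀ N, C (h N) * Qp (q + 1) A N N = B N := fun N => by
    induction N with
    | zero => simp [hh, hB0, Qp_zero_zero (q + 1) A hAzero hAone]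
    | succ N ih =>
      have hpair := boundary_terms_eq N (fun i => Qp (q + 1) A i N) B _ _ X (hcol N)
        (sum_row_B hT1 hTsup hTsub B hBrec N)
      refine mul_left_cancel₀ (B_monic B hB0 hBrec N).1.ne_zero ?_
      rw [Qp_add_self] at hpair
      simp only [hsucc, C_mul, C_pow, C_neg, C_1]
      linear_combination B (N + 1) * ih - C (h N) * hpair
  have hself : ∀ N, Qp (q + 1) A N N = C (h N)⁻¹ * B N := fun N => by
    rw [← hdiag N, ← mul_assoc, ← C_mul, inv_mul_cancel₀ (hh0 N), C_1, one_mul]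
  intro N
  refine ⟨fun i hi hip => Qp_add_eq_zero _ A N i hi (by omega), hself N, ?_, fun j => ?_⟩
  · rw [Qp_add_self, hself (N + 1), Nat.add_sub_cancel]
    simp only [C_mul, C_pow, C_neg, C_1]
    ring
  · rw [← hcol N j (Nat.lt_succ_iff.mp j.2), Finset.sum_range]
    simp only [truncM, Matrix.of_apply, mul_comm (Qp (q + 1) A _ N)]
end

section
/- (Christoffel coefficients positivity) Assume T^{[N]} admits a positive bidiagonal factorization T^{[N]} = L_1^{[N]} ⋯ L_p^{[N]} U^{[N]}, assume B_{N+1} has N+1 simple real zeros λ_1 > ⋯ > λ_{N+1}, and assume the initial condition matrix ν satisfies ν^{−⊤} = 𝓛·𝓒 for some upper unitriangular p×p matrix 𝓒 with nonnegative entries. Then all Christoffel numbers are positive: μ_{n,a} > 0 for all n ∈ {1,…,N+1} and a ∈ {1,…,p}. -/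
open Polynomial

noncomputable def nuMat (p : ℕ) (A : Fin p → ℕ → Polynomial ℝ) : Matrix (Fin p) (Fin p) ℝ :=
  Matrix.of fun j a : Fin p => (A a (j : ℕ)).coeff 0

noncomputable def wfun (p : ℕ) (A : Fin p → ℕ → Polynomial ℝ) (B : ℕ → Polynomial ℝ)
    (N : ℕ) (lam : Fin (N + 1) → ℝ) (k : Fin (N + 1)) (n : ℕ) : ℝ :=
  Polynomial.eval (lam k) (Qp p A n N) /
    ∑ l ∈ Finset.range (N + 1),
      Polynomial.eval (lam k) (Qp p A l N) * Polynomial.eval (lam k) (B l)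

noncomputable def mu (p : ℕ) (A : Fin p → ℕ → Polynomial ℝ) (B : ℕ → Polynomial ℝ)
    (N : ℕ) (lam : Fin (N + 1) → ℝ) (k : Fin (N + 1)) (a : Fin p) : ℝ :=
  ∑ b : Fin p, (nuMat p A)⁻¹ a b * wfun p A B N lam k (b : ℕ)

noncomputable def Lmat (p sz k : ℕ) (α : ℕ → ℝ) : Matrix (Fin sz) (Fin sz) ℝ :=
  Matrix.of fun i j : Fin sz => if (i : ℕ) = (j : ℕ) then 1
    else if (i : ℕ) = (j : ℕ) + 1 then α (k + 1 + (j : ℕ) * (p + 1)) else 0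

noncomputable def Umat (p sz : ℕ) (α : ℕ → ℝ) : Matrix (Fin sz) (Fin sz) ℝ :=
  Matrix.of fun i j : Fin sz => if (j : ℕ) = (i : ℕ) + 1 then 1
    else if (i : ℕ) = (j : ℕ) then α (1 + (i : ℕ) * (p + 1)) else 0

noncomputable def scrL (p : ℕ) (α : ℕ → ℝ) : Matrix (Fin p) (Fin p) ℝ :=
  Matrix.of fun i c : Fin p =>
    if (c : ℕ) = 0 then (if (i : ℕ) = 0 then (1 : ℝ) else 0)
    else (1 / ∏ t ∈ Finset.range (c : ℕ), α ((c : ℕ) + 1 + t * p)) *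
      Matrix.mulVec (((List.range' 1 (c : ℕ)).map fun j => Lmat p p j α).prod)
        (fun j : Fin p => if (j : ℕ) = 0 then 1 else 0) i

/-- The Wronskian of two real polynomials, evaluated at `x`, as a bilinear form. -/
noncomputable def evalWronskian (x : ℝ) : ℝ[X] →ₗ[ℝ] ℝ[X] →ₗ[ℝ] ℝ :=
  (wronskianBilin ℝ).compr₂ (leval x)

lemma evalWronskian_apply (x : ℝ) (f g : ℝ[X]) :
    evalWronskian x f g
      = eval x f * eval x (derivative g) - eval x (derivative f) * eval x g := by
  simp [evalWronskian, wronskian]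

lemma evalWronskian_self (x : ℝ) (f : ℝ[X]) : evalWronskian x f f = 0 := by
  rw [evalWronskian_apply]; ring

lemma evalWronskian_swap (x : ℝ) (f g : ℝ[X]) :
    evalWronskian x f g = -evalWronskian x g f := by
  simp only [evalWronskian_apply]; ring

lemma evalWronskian_X_mul_self (x : ℝ) (f : ℝ[X]) :
    evalWronskian x f (X * f) = eval x f ^ 2 := by
  simp only [evalWronskian_apply, derivative_mul, derivative_X, eval_add, eval_mul, eval_X,
    eval_one]
  ring

lemma evalWronskian_X_mul_X_mul (x : ℝ) (f g : ℝ[X]) :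
    evalWronskian x (X * f) (X * g) = x ^ 2 * evalWronskian x f g := by
  simp only [evalWronskian_apply, derivative_mul, derivative_X, eval_add, eval_mul, eval_X,
    eval_one]
  ring

/-- A Wronskian form of interlacing, at the point `x`, of the polynomials `h 0, …, h p`. -/
def WronskianInterlacing (x : ℝ) (p : ℕ) (h : ℕ → ℝ[X]) : Prop :=
  (∀ i j, i < j → j ≤ p → 0 ≤ evalWronskian x (h i) (h j)) ∧
  (∀ i j, i < j → j ≤ p → 0 < evalWronskian x (h i) (X * h j)) ∧
  0 < evalWronskian x (h 0) (h p) + eval x (h p) ^ 2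

/-- The image of `h 0, …, h p` under one period of the bidiagonal recursion. -/
noncomputable def bidiagStep (p : ℕ) (a : ℕ → ℝ) (h : ℕ → ℝ[X]) (k : ℕ) : ℝ[X] :=
  X * h p - ∑ j ∈ Finset.range (k + 1), a j • h j

lemma bidiagStep_succ (p : ℕ) (a : ℕ → ℝ) (h : ℕ → ℝ[X]) (k : ℕ) :
    bidiagStep p a h (k + 1) = bidiagStep p a h k - a (k + 1) • h (k + 1) := by
  simp only [bidiagStep, Finset.sum_range_succ _ (k + 1)]
  ring

lemma bidiagStep_eq_sub_sum_Ico (p : ℕ) (a : ℕ → ℝ) (h : ℕ → ℝ[X]) {i k : ℕ} (hik : i ≤ k) :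
    bidiagStep p a h k
      = bidiagStep p a h i - ∑ j ∈ Finset.Ico (i + 1) (k + 1), a j • h j := by
  rw [bidiagStep, bidiagStep,
    ← Finset.sum_range_add_sum_Ico (fun j => a j • h j) (Nat.succ_le_succ hik)]
  simp only [Nat.succ_eq_add_one]
  ring

lemma evalWronskian_bidiagStep (x : ℝ) (p : ℕ) (a : ℕ → ℝ) (h : ℕ → ℝ[X]) (f : ℝ[X]) (k : ℕ) :
    evalWronskian x f (bidiagStep p a h k) = evalWronskian x f (X * h p)
      + ∑ j ∈ Finset.range (k + 1), a j * evalWronskian x (h j) f := by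
  have hsum : evalWronskian x f (∑ j ∈ Finset.range (k + 1), a j • h j)
      = -∑ j ∈ Finset.range (k + 1), a j * evalWronskian x (h j) f := by
    rw [map_sum, ← Finset.sum_neg_distrib]
    refine Finset.sum_congr rfl fun j _ => ?_
    rw [map_smul, smul_eq_mul, evalWronskian_swap x f, mul_neg]
  rw [bidiagStep, map_sub, hsum, sub_neg_eq_add]

namespace WronskianInterlacing

variable {x : ℝ} {p : ℕ} {a : ℕ → ℝ} {h : ℕ → ℝ[X]}

lemma evalWronskian_nonneg (H : WronskianInterlacing x p h) {i j : ℕ} (hij : i ≤ j) (hj : j ≤ p) :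
    0 ≤ evalWronskian x (h i) (h j) := by
  rcases hij.eq_or_lt with rfl | hlt
  · rw [evalWronskian_self]
  · exact H.1 i j hlt hj

lemma evalWronskian_X_mul_nonneg (H : WronskianInterlacing x p h) {i j : ℕ} (hij : i ≤ j)
    (hj : j ≤ p) : 0 ≤ evalWronskian x (h i) (X * h j) := by
  rcases hij.eq_or_lt with rfl | hlt
  · rw [evalWronskian_X_mul_self]; positivity
  · exact (H.2.1 i j hlt hj).le

lemma evalWronskian_bidiagStep_zero_pos (H : WronskianInterlacing x p h) (ha : 0 < a 0)
    {i : ℕ} (hi : i ≤ p) :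
    0 < evalWronskian x (h i) (bidiagStep p a h 0) := by
  rw [evalWronskian_bidiagStep]
  simp only [zero_add, Finset.sum_range_one]
  have h0 := H.evalWronskian_nonneg (Nat.zero_le i) hi
  rcases hi.eq_or_lt with rfl | hlt
  · rw [evalWronskian_X_mul_self]
    rcases h0.eq_or_lt with h1 | h1
    · have := H.2.2
      rw [← h1] at this ⊢
      linarith
    · positivity
  · have := H.2.1 i p hlt le_rfl
    positivity

lemma evalWronskian_bidiagStep_nonneg (H : WronskianInterlacing x p h)
    (ha : ∀ j ≤ p, 0 < a j) {i k : ℕ} (hki : k < i) (hi : i ≤ p) :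
    0 ≤ evalWronskian x (h i) (bidiagStep p a h k) := by
  rw [evalWronskian_bidiagStep]
  refine add_nonneg (H.evalWronskian_X_mul_nonneg hi le_rfl) (Finset.sum_nonneg fun j hj => ?_)
  rw [Finset.mem_range] at hj
  exact mul_nonneg (ha j (by omega)).le (H.evalWronskian_nonneg (by omega) hi)

lemma evalWronskian_X_mul_bidiagStep_pos (H : WronskianInterlacing x p h)
    (ha : ∀ j ≤ p, 0 < a j) {i k : ℕ} (hki : k < i) (hi : i ≤ p) :
    0 < evalWronskian x (X * h i) (bidiagStep p a h k) := by
  rw [evalWronskian_bidiagStep, evalWronskian_X_mul_X_mul]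
  refine add_pos_of_nonneg_of_pos (mul_nonneg (sq_nonneg x) (H.evalWronskian_nonneg hi le_rfl))
    (Finset.sum_pos (fun j hj => ?_) ⟨0, by simp⟩)
  rw [Finset.mem_range] at hj
  exact mul_pos (ha j (by omega)) (H.2.1 j i (by omega) hi)

/-- One period of the bidiagonal recursion with positive coefficients preserves interlacing. -/
lemma bidiagStep (hp : 1 ≤ p) (H : WronskianInterlacing x p h) (ha : ∀ j ≤ p, 0 < a j) :
    WronskianInterlacing x p (bidiagStep p a h) := by
  have key : ∀ i k, i < k → evalWronskian x (_root_.bidiagStep p a h i)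
      (_root_.bidiagStep p a h k) = ∑ j ∈ Finset.Ico (i + 1) (k + 1),
        a j * evalWronskian x (h j) (_root_.bidiagStep p a h i) := by
    intro i k hik
    rw [bidiagStep_eq_sub_sum_Ico p a h hik.le, map_sub, evalWronskian_self, map_sum, zero_sub,
      ← Finset.sum_neg_distrib]
    refine Finset.sum_congr rfl fun j _ => ?_
    rw [map_smul, smul_eq_mul, evalWronskian_swap]; ring
  have hnn : ∀ i k, i < k → k ≤ p → ∀ j ∈ Finset.Ico (i + 1) (k + 1),
      0 ≤ a j * evalWronskian x (h j) (_root_.bidiagStep p a h i) := by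
    intro i k hik hk j hj
    rw [Finset.mem_Ico] at hj
    exact mul_nonneg (ha j (by omega)).le
      (H.evalWronskian_bidiagStep_nonneg ha (by omega) (by omega))
  refine ⟨fun i k hik hk => ?_, fun i k hik hk => ?_, ?_⟩
  · rw [key i k hik]
    exact Finset.sum_nonneg (hnn i k hik hk)
  · rw [bidiagStep_eq_sub_sum_Ico p a h hik.le, mul_sub, map_sub, evalWronskian_X_mul_self,
      Finset.mul_sum, map_sum, sub_eq_add_neg, ← Finset.sum_neg_distrib]
    refine add_pos_of_nonneg_of_pos (sq_nonneg _)
      (Finset.sum_pos (fun j hj => ?_) ⟨k, by simp; omega⟩)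
    rw [Finset.mem_Ico] at hj
    rw [mul_smul_comm, map_smul, smul_eq_mul, evalWronskian_swap, mul_neg, neg_neg]
    exact mul_pos (ha j (by omega))
      (H.evalWronskian_X_mul_bidiagStep_pos ha (by omega) (by omega))
  · rw [key 0 p hp]
    refine add_pos_of_pos_of_nonneg
      (Finset.sum_pos' (hnn 0 p hp le_rfl) ⟨p, by simp; omega, ?_⟩) (sq_nonneg _)
    exact mul_pos (ha p le_rfl)
      (H.evalWronskian_bidiagStep_zero_pos (ha 0 (Nat.zero_le p)) le_rfl)

end WronskianInterlacing

lemma wronskianInterlacing_one (x : ℝ) (p : ℕ) : WronskianInterlacing x p fun _ => 1 := by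
  refine ⟨fun i j _ _ => ?_, fun i j _ _ => ?_, ?_⟩ <;>
    simp [evalWronskian_apply]

/-- The polynomials produced by iterating the bidiagonal recursion upwards from the last row of
an `(N + 1) × (N + 1)` bidiagonal factorization with parameters `α`. -/
noncomputable def bidiagPoly (p : ℕ) (α : ℕ → ℝ) (N : ℕ) : ℕ → ℕ → ℝ[X]
  | 0 => fun _ => 1
  | n + 1 => bidiagStep p (fun k => α ((N - n) * (p + 1) + 1 - k)) (bidiagPoly p α N n)

lemma bidiagPoly_succ (p : ℕ) (α : ℕ → ℝ) (N n : ℕ) :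
    bidiagPoly p α N (n + 1)
      = bidiagStep p (fun k => α ((N - n) * (p + 1) + 1 - k)) (bidiagPoly p α N n) := rfl

lemma wronskianInterlacing_bidiagPoly (x : ℝ) {p : ℕ} (hp : 1 ≤ p) {α : ℕ → ℝ}
    (hα : ∀ i, 1 ≤ i → 0 < α i) (N : ℕ) {n : ℕ} (hn : n ≤ N) :
    WronskianInterlacing x p (bidiagPoly p α N n) := by
  induction n with
  | zero => exact wronskianInterlacing_one x p
  | succ n ih =>
    rw [bidiagPoly_succ]
    refine (ih (by omega)).bidiagStep hp fun j hj => hα _ ?_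
    have : 1 * (p + 1) ≤ (N - n) * (p + 1) := Nat.mul_le_mul_right _ (by omega)
    omega

lemma evalWronskian_bidiagPoly_pos (x : ℝ) {p : ℕ} (hp : 1 ≤ p) {α : ℕ → ℝ}
    (hα : ∀ i, 1 ≤ i → 0 < α i) (N : ℕ) {i : ℕ} (hi : i ≤ p) :
    0 < evalWronskian x (bidiagPoly p α N N i) (bidiagPoly p α N (N + 1) 0) := by
  rw [bidiagPoly_succ]
  refine (wronskianInterlacing_bidiagPoly x hp hα N le_rfl).evalWronskian_bidiagStep_zero_pos
    ?_ hi
  exact hα _ (Nat.le_add_left 1 _)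

/-- For a factorization of size `N + 1`, the `r`-th entry of the common left vector multiplied by
`L_1 ⋯ L_{c - 1}`, extended by zero to `r > N`. -/
noncomputable def leftPoly (p : ℕ) (α : ℕ → ℝ) (N c r : ℕ) : ℝ[X] :=
  if r ≤ N then bidiagPoly p α N (N - r) (p + 1 - c) else 0

lemma leftPoly_add (p : ℕ) (α : ℕ → ℝ) (N : ℕ) {c : ℕ} (hc : 1 ≤ c) (hcp : c ≤ p) (r : ℕ) :
    leftPoly p α N c r + α (c + 1 + r * (p + 1)) • leftPoly p α N c (r + 1)
      = leftPoly p α N (c + 1) r := by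
  unfold leftPoly
  rcases lt_trichotomy r N with hr | rfl | hr
  · obtain ⟨n, rfl⟩ : ∃ n, N = r + 1 + n := ⟨N - (r + 1), by omega⟩
    obtain ⟨k, rfl⟩ : ∃ k, p = c + k := ⟨p - c, by omega⟩
    have e1 : r + 1 + n - r = n + 1 := by omega
    have e2 : r + 1 + n - (r + 1) = n := by omega
    have e3 : c + k + 1 - c = k + 1 := by omega
    have e4 : c + k + 1 - (c + 1) = k := by omega
    have e5 : r + 1 + n - n = r + 1 := by omega
    have e6 : (r + 1) * (c + k + 1) + 1 - (k + 1) = c + 1 + r * (c + k + 1) := by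
      rw [add_mul]; omega
    rw [if_pos (by omega), if_pos (by omega), if_pos (by omega), e1, e2, e3, e4,
      bidiagPoly_succ, bidiagStep_succ, e5, e6]
    ring
  · simp [bidiagPoly]
  · rw [if_neg (by omega), if_neg (by omega), if_neg (by omega)]
    simp

lemma leftPoly_top (p : ℕ) (α : ℕ → ℝ) (N : ℕ) {r : ℕ} (hr : r ≤ N) :
    α (1 + r * (p + 1)) • leftPoly p α N (p + 1) r
      + (if r = 0 then bidiagPoly p α N (N + 1) 0 else leftPoly p α N (p + 1) (r - 1))
      = X * leftPoly p α N 1 r := by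
  have hstep : ∀ n ≤ N, n = N - r → α (1 + r * (p + 1)) • bidiagPoly p α N n 0
      + bidiagPoly p α N (n + 1) 0 = X * bidiagPoly p α N n p := by
    intro n hn hnr
    have e : N - n = r := by omega
    rw [bidiagPoly_succ, bidiagStep, e]
    simp [add_comm]
  have := hstep (N - r) (by omega) rfl
  unfold leftPoly
  rw [if_pos hr, if_pos hr, Nat.sub_self, Nat.add_sub_cancel, ← this]
  congr 1
  split_ifs with h0 h1
  · simp [h0]
  · congr 2; omega
  · omega

lemma vecMul_Lmat (p sz k : ℕ) (α : ℕ → ℝ) (v : Fin sz → ℝ) (r : Fin sz) :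
    Matrix.vecMul v (Lmat p sz k α) r
      = v r + if h : (r : ℕ) + 1 < sz then α (k + 1 + r * (p + 1)) * v ⟨r + 1, h⟩ else 0 := by
  simp only [Matrix.vecMul, dotProduct, Lmat, Matrix.of_apply]
  rw [← Finset.add_sum_erase _ _ (Finset.mem_univ r)]
  congr 1
  · simp
  · split_ifs with h
    · rw [Finset.sum_eq_single ⟨r + 1, h⟩]
      · simp [mul_comm]
      · intro b hb hb'
        have h1 : (b : ℕ) ≠ r := fun e => (Finset.ne_of_mem_erase hb) (Fin.ext e)
        have h2 : (b : ℕ) ≠ r + 1 := fun e => hb' (Fin.ext e)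
        simp [h1, h2]
      · intro hb
        exact absurd (Finset.mem_erase.2 ⟨by simp [Fin.ext_iff], Finset.mem_univ _⟩) hb
    · refine Finset.sum_eq_zero fun b hb => ?_
      have h1 : (b : ℕ) ≠ r := fun e => (Finset.ne_of_mem_erase hb) (Fin.ext e)
      have h2 : (b : ℕ) ≠ r + 1 := by have := b.2; omega
      simp [h1, h2]

lemma vecMul_Umat (p N : ℕ) (α : ℕ → ℝ) (v : ℕ → ℝ) (r : Fin (N + 1)) :
    Matrix.vecMul (fun i : Fin (N + 1) => v i) (Umat p (N + 1) α) r
      = α (1 + r * (p + 1)) * v r + if (r : ℕ) = 0 then 0 else v (r - 1) := by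
  simp only [Matrix.vecMul, dotProduct, Umat, Matrix.of_apply]
  rw [← Finset.add_sum_erase _ _ (Finset.mem_univ r)]
  congr 1
  · simp [mul_comm]
  · split_ifs with h
    · refine Finset.sum_eq_zero fun b hb => ?_
      have h1 : (b : ℕ) ≠ r := fun e => (Finset.ne_of_mem_erase hb) (Fin.ext e)
      have h2 : (r : ℕ) ≠ b + 1 := by omega
      simp [h1, h2]
    · have hr : (r : ℕ) - 1 < N + 1 := by have := r.2; omega
      have hr' : (r : ℕ) = r - 1 + 1 := by omega
      rw [Finset.sum_eq_single ⟨r - 1, hr⟩]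
      · simp [← hr']
      · intro b hb hb'
        have h1 : (b : ℕ) ≠ r := fun e => (Finset.ne_of_mem_erase hb) (Fin.ext e)
        have h2 : (r : ℕ) ≠ b + 1 := fun e => hb' (Fin.ext (by simp; omega))
        simp [h1, h2]
      · intro hb
        refine absurd (Finset.mem_erase.2 ⟨?_, Finset.mem_univ _⟩) hb
        intro e
        have := congrArg Fin.val e
        simp at this
        omega

/-- Multiplying the left vector by the first `m` lower bidiagonal factors. The truncation to size
`sz` is harmless either because the vector is supported in it or for sufficiently early entries. -/
lemma vecMul_prod_Lmat (x : ℝ) (p : ℕ) (α : ℕ → ℝ) (N sz m : ℕ) (hm : m ≤ p) (r : Fin sz)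
    (hr : N + 1 ≤ sz ∨ (r : ℕ) + m < sz) :
    Matrix.vecMul (fun i : Fin sz => eval x (leftPoly p α N 1 i))
      ((List.range m).map fun k => Lmat p sz (k + 1) α).prod r
      = eval x (leftPoly p α N (m + 1) r) := by
  induction m generalizing r with
  | zero => simp
  | succ m ih =>
    rw [List.range_succ, List.map_append, List.prod_append, List.map_singleton,
      List.prod_singleton, ← Matrix.vecMul_vecMul, vecMul_Lmat,
      ih (by omega) r (by omega), ← leftPoly_add p α N (c := m + 1) (by omega) hm r]
    split_ifs with h
    · rw [ih (by omega) ⟨r + 1, h⟩ (by simp only; omega)]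
      simp
    · have : leftPoly p α N (m + 1) (r + 1) = 0 := by
        rw [leftPoly, if_neg (by omega)]
      simp [this]

/-- The left eigenvector equation, with the defect in the first column. -/
lemma sum_leftPoly_mul (p N : ℕ) (T : ℕ → ℕ → ℝ) (α : ℕ → ℝ)
    (hfact : truncM T N =
      (((List.range p).map fun k => Lmat p (N + 1) (k + 1) α).prod) * Umat p (N + 1) α)
    (x : ℝ) {n : ℕ} (hn : n ≤ N) :
    ∑ m ∈ Finset.range (N + 1), eval x (leftPoly p α N 1 m) * T m n
      = x * eval x (leftPoly p α N 1 n)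
        - if n = 0 then eval x (bidiagPoly p α N (N + 1) 0) else 0 := by
  have h1 : ∑ m ∈ Finset.range (N + 1), eval x (leftPoly p α N 1 m) * T m n
      = Matrix.vecMul (fun i : Fin (N + 1) => eval x (leftPoly p α N 1 i)) (truncM T N)
        ⟨n, by omega⟩ := by
    rw [Finset.sum_range]
    rfl
  have h2 : Matrix.vecMul (fun i : Fin (N + 1) => eval x (leftPoly p α N 1 i))
      ((List.range p).map fun k => Lmat p (N + 1) (k + 1) α).prod
      = fun i : Fin (N + 1) => eval x (leftPoly p α N (p + 1) i) :=
    funext fun r => vecMul_prod_Lmat x p α N (N + 1) p le_rfl r (Or.inl le_rfl)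
  rw [h1, hfact, ← Matrix.vecMul_vecMul, h2,
    vecMul_Umat p N α (fun i => eval x (leftPoly p α N (p + 1) i))]
  have h3 := congrArg (eval x) (leftPoly_top p α N hn)
  simp only [eval_add, eval_smul, smul_eq_mul, eval_mul, eval_X] at h3
  rw [← h3]
  simp only
  split_ifs <;> ring

/-- The type II recurrence in matrix form, truncated to the rows and columns `0, …, N`. -/
lemma X_mul_typeII {p : ℕ} {T : ℕ → ℕ → ℝ} (hT1 : ∀ n, T n (n + 1) = 1)
    (hTsup : ∀ n m, n + 1 < m → T n m = 0) (hTsub : ∀ n m, m + p < n → T n m = 0)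
    {B : ℕ → ℝ[X]}
    (hBrec : ∀ n, B (n + 1) = (X - C (T n n)) * B n
      - ∑ j ∈ Finset.Icc 1 p, (if j ≤ n then C (T n (n - j)) * B (n - j) else 0))
    {N n : ℕ} (hn : n ≤ N) :
    X * B n = ∑ m ∈ Finset.range (N + 1), C (T n m) * B m
      + if n = N then B (N + 1) else 0 := by
  have hlow : ∑ j ∈ Finset.Icc 1 p, (if j ≤ n then C (T n (n - j)) * B (n - j) else 0)
      = ∑ m ∈ Finset.range n, C (T n m) * B m := by
    rw [← Finset.sum_filter]
    refine Finset.sum_bij_ne_zero (fun j _ _ => n - j) ?_ ?_ ?_ ?_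
    · intro j hj _
      simp only [Finset.mem_filter, Finset.mem_Icc] at hj
      simp only [Finset.mem_range]
      omega
    · intro i hi _ j hj _ hij
      simp only [Finset.mem_filter, Finset.mem_Icc] at hi hj
      omega
    · intro m hm hne
      rw [Finset.mem_range] at hm
      have hmp : n ≤ m + p := by
        by_contra hlt
        exact hne (by rw [hTsub n m (by omega)]; simp)
      have e : n - (n - m) = m := by omega
      exact ⟨n - m, by simp only [Finset.mem_filter, Finset.mem_Icc]; omega, by rwa [e], e⟩
    · intro j _ _
      rfl
  have hfull : X * B n = ∑ m ∈ Finset.range (n + 2), C (T n m) * B m := by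
    rw [Finset.sum_range_succ, Finset.sum_range_succ, ← hlow, hT1, hBrec n]
    simp only [map_one]
    ring
  rw [hfull]
  split_ifs with h
  · subst h
    rw [Finset.sum_range_succ _ (n + 1), hT1]
    simp
  · rw [add_zero]
    refine Finset.sum_subset (by simp; omega) fun m _ hm => ?_
    rw [Finset.mem_range] at hm
    rw [hTsup n m (by omega)]
    simp

/-- The type I recurrence of a sequence vanishing at `N + 1, …, N + p`, in matrix form. -/
lemma typeI_sum_eq {p : ℕ} {T : ℕ → ℕ → ℝ} (hT1 : ∀ n, T n (n + 1) = 1)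
    (hTsup : ∀ n m, n + 1 < m → T n m = 0) (hTsub : ∀ n m, m + p < n → T n m = 0)
    {N : ℕ} {v : ℕ → ℝ} (hv : ∀ m, N < m → m ≤ N + p → v m = 0) {n : ℕ} (hn : n ≤ N) :
    (if n = 0 then 0 else v (n - 1)) + ∑ i ∈ Finset.range (p + 1), T (n + i) n * v (n + i)
      = ∑ m ∈ Finset.range (N + 1), v m * T m n := by
  have hext : ∑ m ∈ Finset.range (N + 1), v m * T m n
      = ∑ m ∈ Finset.range (N + p + 1), v m * T m n := by
    refine Finset.sum_subset (by simp) fun m hm hm' => ?_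
    rw [Finset.mem_range] at hm hm'
    rw [hv m (by omega) (by omega), zero_mul]
  have htrim : ∑ m ∈ Finset.range (n + (p + 1)), v m * T m n
      = ∑ m ∈ Finset.range (N + p + 1), v m * T m n := by
    refine Finset.sum_subset (by simp; omega) fun m hm hm' => ?_
    rw [Finset.mem_range] at hm hm'
    rw [hTsub m n (by omega), mul_zero]
  rw [hext, ← htrim, Finset.sum_range_add (fun m => v m * T m n) n (p + 1)]
  congr 1
  · rcases n with _ | n
    · simp
    · rw [Finset.sum_range_succ, hT1, Finset.sum_eq_zero]
      · simp
      · intro m hm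
        rw [Finset.mem_range] at hm
        rw [hTsup m (n + 1) (by omega), mul_zero]
  · exact Finset.sum_congr rfl fun i _ => mul_comm _ _

lemma leftPoly_eq_zero (p : ℕ) (α : ℕ → ℝ) {N c r : ℕ} (hr : N < r) :
    leftPoly p α N c r = 0 := by
  rw [leftPoly, if_neg (by omega)]

lemma leftPoly_last (p : ℕ) (α : ℕ → ℝ) (N c : ℕ) : leftPoly p α N c N = 1 := by
  simp [leftPoly, bidiagPoly]

/-- The bidiagonal recursion reproduces the type II polynomial `B (N + 1)`. -/
lemma bidiagPoly_eq_typeII {p : ℕ} {T : ℕ → ℕ → ℝ} {B : ℕ → ℝ[X]} (hB0 : B 0 = 1) {N : ℕ}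
    (hB : ∀ n ≤ N, X * B n = ∑ m ∈ Finset.range (N + 1), C (T n m) * B m
      + if n = N then B (N + 1) else 0)
    {α : ℕ → ℝ}
    (hleft : ∀ x : ℝ, ∀ n ≤ N, ∑ m ∈ Finset.range (N + 1), eval x (leftPoly p α N 1 m) * T m n
      = x * eval x (leftPoly p α N 1 n)
        - if n = 0 then eval x (bidiagPoly p α N (N + 1) 0) else 0) :
    bidiagPoly p α N (N + 1) 0 = B (N + 1) := by
  refine Polynomial.funext fun x => ?_
  set w : ℕ → ℝ := fun m => eval x (leftPoly p α N 1 m) with hw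
  have hR : ∑ n ∈ Finset.range (N + 1), w n * (x * eval x (B n))
      = ∑ n ∈ Finset.range (N + 1), ∑ m ∈ Finset.range (N + 1), w n * (T n m * eval x (B m))
        + eval x (B (N + 1)) := by
    have : ∀ n ∈ Finset.range (N + 1), w n * (x * eval x (B n))
        = ∑ m ∈ Finset.range (N + 1), w n * (T n m * eval x (B m))
          + if n = N then w n * eval x (B (N + 1)) else 0 := by
      intro n hn
      have h := congrArg (eval x) (hB n (by simpa [Nat.lt_succ_iff] using hn))
      rw [eval_mul, eval_X, eval_add, eval_finsetSum] at h
      rw [h, mul_add, Finset.mul_sum]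
      congr 1
      · simp
      · split_ifs <;> simp
    rw [Finset.sum_congr rfl this, Finset.sum_add_distrib]
    simp [hw, leftPoly_last]
  have hL : ∑ m ∈ Finset.range (N + 1), ∑ n ∈ Finset.range (N + 1), w n * (T n m * eval x (B m))
      = ∑ m ∈ Finset.range (N + 1), w m * (x * eval x (B m))
        - eval x (bidiagPoly p α N (N + 1) 0) := by
    have : ∀ m ∈ Finset.range (N + 1), ∑ n ∈ Finset.range (N + 1), w n * (T n m * eval x (B m))
        = w m * (x * eval x (B m))
          - if m = 0 then eval x (bidiagPoly p α N (N + 1) 0) else 0 := by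
      intro m hm
      have h := hleft x m (by simpa [Nat.lt_succ_iff] using hm)
      have e : ∑ n ∈ Finset.range (N + 1), w n * (T n m * eval x (B m))
          = (∑ n ∈ Finset.range (N + 1), w n * T n m) * eval x (B m) := by
        rw [Finset.sum_mul]
        exact Finset.sum_congr rfl fun n _ => by ring
      rw [e, h]
      split_ifs with h0
      · subst h0; simp [hB0]; ring
      · ring
    rw [Finset.sum_congr rfl this, Finset.sum_sub_distrib]
    simp
  rw [Finset.sum_comm] at hL
  linarith

/-- The pairing of the left and right eigenvectors at a zero of `B (N + 1)`. -/
lemma sum_leftPoly_mul_typeII {p : ℕ} {T : ℕ → ℕ → ℝ} {B : ℕ → ℝ[X]} {N : ℕ}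
    (hB : ∀ n ≤ N, X * B n = ∑ m ∈ Finset.range (N + 1), C (T n m) * B m
      + if n = N then B (N + 1) else 0)
    {α : ℕ → ℝ} {x : ℝ}
    (hleft : ∀ n ≤ N, ∑ m ∈ Finset.range (N + 1), eval x (leftPoly p α N 1 m) * T m n
      = x * eval x (leftPoly p α N 1 n)) :
    ∑ n ∈ Finset.range (N + 1), eval x (leftPoly p α N 1 n) * eval x (B n)
      = eval x (derivative (B (N + 1))) := by
  set w : ℕ → ℝ := fun m => eval x (leftPoly p α N 1 m) with hw
  have hR : ∑ n ∈ Finset.range (N + 1), w n * eval x (B n)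
      = ∑ n ∈ Finset.range (N + 1), ∑ m ∈ Finset.range (N + 1),
          w n * (T n m * eval x (derivative (B m)))
        - ∑ n ∈ Finset.range (N + 1), w n * (x * eval x (derivative (B n)))
        + eval x (derivative (B (N + 1))) := by
    have : ∀ n ∈ Finset.range (N + 1), w n * eval x (B n)
        = ∑ m ∈ Finset.range (N + 1), w n * (T n m * eval x (derivative (B m)))
          - w n * (x * eval x (derivative (B n)))
          + if n = N then w n * eval x (derivative (B (N + 1))) else 0 := by
      intro n hn
      have h := congrArg (fun f => eval x (derivative f))
        (hB n (by simpa [Nat.lt_succ_iff] using hn))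
      simp only [derivative_mul, derivative_X, one_mul, eval_add, eval_mul, eval_X, derivative_add,
        derivative_sum, eval_finsetSum, derivative_C, zero_mul, zero_add, eval_C] at h
      have e : eval x (B n) = ∑ m ∈ Finset.range (N + 1), T n m * eval x (derivative (B m))
          - x * eval x (derivative (B n))
          + eval x (derivative (if n = N then B (N + 1) else 0)) := by linarith
      rw [e, mul_add, mul_sub, Finset.mul_sum]
      congr 1
      split_ifs <;> simp
    rw [Finset.sum_congr rfl this, Finset.sum_add_distrib, Finset.sum_sub_distrib]
    simp [hw, leftPoly_last]
  rw [hR, Finset.sum_comm, add_eq_right, sub_eq_zero]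
  refine Finset.sum_congr rfl fun m hm => ?_
  have h := hleft m (by simpa [Nat.lt_succ_iff] using hm)
  rw [← mul_assoc, mul_comm (eval x (leftPoly p α N 1 m)) x, ← h, Finset.sum_mul]
  exact Finset.sum_congr rfl fun n _ => by ring

/-- A solution of the truncated type I recurrence vanishing at `N, …, N + p` vanishes. -/
lemma typeI_eq_zero {p N : ℕ} {T : ℕ → ℕ → ℝ} {x : ℝ} {v : ℕ → ℝ}
    (hv : ∀ m, N ≤ m → m ≤ N + p → v m = 0)
    (hrec : ∀ n ≤ N, (if n = 0 then 0 else v (n - 1))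
      + ∑ i ∈ Finset.range (p + 1), T (n + i) n * v (n + i) = x * v n) :
    ∀ m ≤ N + p, v m = 0 := by
  have hdown : ∀ d ≤ N, ∀ m, N - d ≤ m → m ≤ N + p → v m = 0 := by
    intro d
    induction d with
    | zero => intro _ m h1 h2; exact hv m (by omega) h2
    | succ d ih =>
      intro hd m h1 h2
      rcases h1.eq_or_lt with h | h
      · have hr := hrec (m + 1) (by omega)
        rw [if_neg (by omega), Finset.sum_eq_zero, ih (by omega) (m + 1) (by omega) (by omega)]
          at hr
        · simpa using hr
        · intro i hi
          rw [Finset.mem_range] at hi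
          rw [ih (by omega) (m + 1 + i) (by omega) (by omega), mul_zero]
      · exact ih (by omega) m (by omega) h2
  intro m hm
  exact hdown N le_rfl m (by omega) hm

/-- A solution of the truncated type I recurrence with vanishing initial values vanishes. -/
lemma typeI_eq_zero_of_initial {p N : ℕ} (hp : 1 ≤ p) {T : ℕ → ℕ → ℝ}
    (hTlow : ∀ n, p ≤ n → T n (n - p) ≠ 0) {x : ℝ} {v : ℕ → ℝ}
    (hv : ∀ m < p, v m = 0)
    (hrec : ∀ n ≤ N, (if n = 0 then 0 else v (n - 1))
      + ∑ i ∈ Finset.range (p + 1), T (n + i) n * v (n + i) = x * v n) :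
    ∀ m ≤ N + p, v m = 0 := by
  intro m
  induction m using Nat.strong_induction_on with
  | _ m ih =>
    intro hm
    by_cases hmp : m < p
    · exact hv m hmp
    · obtain ⟨n, rfl⟩ : ∃ n, m = n + p := ⟨m - p, by omega⟩
      have hr := hrec n (by omega)
      have hz : (if n = 0 then 0 else v (n - 1)) = 0 := by
        split_ifs
        · rfl
        · exact ih (n - 1) (by omega) (by omega)
      rw [hz, Finset.sum_range_succ, Finset.sum_eq_zero, ih n (by omega) (by omega)] at hr
      · have hT := hTlow (n + p) (by omega)
        rw [Nat.add_sub_cancel] at hT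
        simpa [hT] using hr
      · intro i hi
        rw [Finset.mem_range] at hi
        rw [ih (n + i) (by omega) (by omega), mul_zero]

/-- At every point `Q_n` is a fixed linear functional of the vector of type I polynomials. -/
lemma exists_linearMap_eval_Qp {p : ℕ} (hp : 1 ≤ p) (A : Fin p → ℕ → ℝ[X]) (N : ℕ) (x : ℝ) :
    ∃ ℓ : (Fin p → ℝ) →ₗ[ℝ] ℝ, ∀ n, eval x (Qp p A n N) = ℓ fun a => eval x (A a n) := by
  let M : Matrix (Fin p) (Fin p) ℝ := Matrix.of fun i a => eval x (A a (N + i))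
  refine ⟨LinearMap.proj ⟨0, hp⟩ ∘ₗ Matrix.cramer M.transpose, fun n => ?_⟩
  rw [LinearMap.comp_apply, LinearMap.proj_apply, Matrix.cramer_transpose_apply, Qp,
    ← coe_evalRingHom, RingHom.map_det]
  congr 1
  ext i a
  by_cases hi : (i : ℕ) = 0
  · obtain rfl : i = ⟨0, hp⟩ := Fin.ext hi
    simp
  · have hi' : i ≠ ⟨0, hp⟩ := fun e => hi (by rw [e])
    simp [Matrix.updateRow_ne hi', hi, M]

lemma eval_Qp_eq_zero {p : ℕ} (A : Fin p → ℕ → ℝ[X]) (N : ℕ) (x : ℝ) {m : ℕ} (h1 : N < m)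
    (h2 : m < N + p) : eval x (Qp p A m N) = 0 := by
  have : Qp p A m N = 0 := by
    refine Matrix.det_zero_of_row_eq (i := ⟨0, by omega⟩) (j := ⟨m - N, by omega⟩) ?_ ?_
    · simp only [ne_eq, Fin.mk.injEq]; omega
    · funext a
      have h3 : m - N ≠ 0 := by omega
      have h4 : N + (m - N) = m := by omega
      simp [h3, h4]
  rw [this, eval_zero]

lemma isUnit_det_nuMat {p : ℕ} {A : Fin p → ℕ → ℝ[X]}
    (hAzero : ∀ a : Fin p, ∀ j : ℕ, j < (a : ℕ) → A a j = 0)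
    (hAone : ∀ a : Fin p, A a (a : ℕ) = 1) : IsUnit (nuMat p A).det := by
  have htri : (nuMat p A).BlockTriangular OrderDual.toDual := by
    intro j a hja
    simp [nuMat, hAzero a j hja]
  rw [Matrix.det_of_isLowerTriangular _ htri]
  simp [nuMat, hAone]

/-- The values `Q_n(x)` at a zero `x` of `B (N + 1)` are proportional to the left eigenvector
produced by the bidiagonal recursion. -/
lemma eval_Qp_eq_mul_leftPoly {p : ℕ} (hp : 1 ≤ p) {T : ℕ → ℕ → ℝ}
    (hT1 : ∀ n, T n (n + 1) = 1) (hTsup : ∀ n m, n + 1 < m → T n m = 0)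
    (hTsub : ∀ n m, m + p < n → T n m = 0) (hTlow : ∀ n, p ≤ n → T n (n - p) ≠ 0)
    {A : Fin p → ℕ → ℝ[X]}
    (hAconst : ∀ a : Fin p, ∀ j < p, ∃ c : ℝ, A a j = C c)
    (hAzero : ∀ a : Fin p, ∀ j : ℕ, j < (a : ℕ) → A a j = 0)
    (hAone : ∀ a : Fin p, A a (a : ℕ) = 1)
    (hArec : ∀ a : Fin p, ∀ n : ℕ,
      (if n = 0 then 0 else A a (n - 1))
        + ∑ i ∈ Finset.range (p + 1), C (T (n + i) n) * A a (n + i) = X * A a n)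
    {N : ℕ} {α : ℕ → ℝ} {x : ℝ}
    (hleft : ∀ n ≤ N, ∑ m ∈ Finset.range (N + 1), eval x (leftPoly p α N 1 m) * T m n
      = x * eval x (leftPoly p α N 1 n)) {m : ℕ} (hm : m ≤ N + p) :
    eval x (Qp p A m N) = eval x (Qp p A N N) * eval x (leftPoly p α N 1 m) := by
  set w : ℕ → ℝ := fun m => eval x (leftPoly p α N 1 m) with hw
  have hw0 : ∀ m, N < m → w m = 0 := fun m h => by simp [hw, leftPoly_eq_zero p α h]
  have hwN : w N = 1 := by simp [hw, leftPoly_last]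
  have hwrec : ∀ n ≤ N, (if n = 0 then 0 else w (n - 1))
      + ∑ i ∈ Finset.range (p + 1), T (n + i) n * w (n + i) = x * w n := fun n hn => by
    rw [typeI_sum_eq hT1 hTsup hTsub (fun m h _ => hw0 m h) hn]
    exact hleft n hn
  let v : ℕ → Fin p → ℝ := fun n a => eval x (A a n)
  have hvrec : ∀ n, (if n = 0 then 0 else v (n - 1))
      + ∑ i ∈ Finset.range (p + 1), T (n + i) n • v (n + i) = x • v n := by
    intro n
    funext a
    have h := congrArg (eval x) (hArec a n)
    simp only [eval_add, eval_finsetSum, eval_mul, eval_C, eval_X] at h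
    simp only [Pi.add_apply, Finset.sum_apply, Pi.smul_apply, smul_eq_mul, v, ← h]
    congr 1
    split_ifs <;> simp
  have hfun : ∀ (ℓ : (Fin p → ℝ) →ₗ[ℝ] ℝ) (κ : ℝ) (n : ℕ), n ≤ N →
      (if n = 0 then 0 else ℓ (v (n - 1)) - κ * w (n - 1))
      + ∑ i ∈ Finset.range (p + 1), T (n + i) n * (ℓ (v (n + i)) - κ * w (n + i))
      = x * (ℓ (v n) - κ * w n) := by
    intro ℓ κ n hn
    have h1 := congrArg ℓ (hvrec n)
    have h2 := hwrec n hn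
    rw [map_add, map_sum, map_smul, smul_eq_mul] at h1
    simp only [map_smul, smul_eq_mul] at h1
    simp only [mul_sub, Finset.sum_sub_distrib]
    have h3 : ∑ i ∈ Finset.range (p + 1), T (n + i) n * (κ * w (n + i))
        = κ * ∑ i ∈ Finset.range (p + 1), T (n + i) n * w (n + i) := by
      rw [Finset.mul_sum]
      exact Finset.sum_congr rfl fun i _ => by ring
    rw [h3]
    by_cases h0 : n = 0
    · simp only [h0, if_true, map_zero] at h1 h2 ⊢
      linear_combination h1 - κ * h2
    · simp only [h0, if_false] at h1 h2 ⊢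
      linear_combination h1 - κ * h2
  obtain ⟨ℓ, hℓ⟩ := exists_linearMap_eval_Qp hp A N x
  have hlast : eval x (Qp p A (N + p) N) = 0 := by
    let c : Fin p → ℝ := Matrix.mulVec (nuMat p A)⁻¹ fun j => w j
    have hc : Matrix.mulVec (nuMat p A) c = fun j : Fin p => w j := by
      simp only [c, Matrix.mulVec_mulVec, Matrix.mul_nonsing_inv _ (isUnit_det_nuMat hAzero hAone),
        Matrix.one_mulVec]
    let ℓc : (Fin p → ℝ) →ₗ[ℝ] ℝ :=
      { toFun := fun u => dotProduct u c
        map_add' := fun u u' => add_dotProduct u u' c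
        map_smul' := fun r u => smul_dotProduct r u c }
    have hzero : ∀ m ≤ N + p, ℓc (v m) - 1 * w m = 0 := by
      refine typeI_eq_zero_of_initial (v := fun m => ℓc (v m) - 1 * w m) hp hTlow ?_ (hfun ℓc 1)
      intro m hm
      have h := congrFun hc ⟨m, hm⟩
      rw [one_mul, sub_eq_zero]
      simp only at h
      rw [← h]
      simp only [ℓc, LinearMap.coe_mk, AddHom.coe_mk, Matrix.mulVec]
      congr 1
      funext a
      obtain ⟨d, hd⟩ := hAconst a m hm
      simp [v, nuMat, hd]
    have hcne : c ≠ 0 := by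
      intro h0
      have := hzero N (by omega)
      rw [hwN] at this
      simp [ℓc, h0] at this
    rw [Qp, ← coe_evalRingHom, RingHom.map_det]
    refine Matrix.exists_mulVec_eq_zero_iff.1 ⟨c, hcne, ?_⟩
    have hrow : ∀ m, N < m → m ≤ N + p → dotProduct (v m) c = 0 := by
      intro m h1 h2
      have h := hzero m h2
      rw [hw0 m h1] at h
      simpa [ℓc] using h
    funext i
    by_cases hi : (i : ℕ) = 0
    · have := hrow (N + p) (by omega) le_rfl
      simpa [Matrix.mulVec, hi, v] using this
    · have := hrow (N + i) (by omega) (by omega)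
      simpa [Matrix.mulVec, hi, v] using this
  have hres := typeI_eq_zero (v := fun m => ℓ (v m) - eval x (Qp p A N N) * w m) ?_
    (hfun ℓ (eval x (Qp p A N N))) m hm
  · rw [hℓ m]
    linarith
  · intro m h1 h2
    simp only [v, ← hℓ]
    rcases h1.eq_or_lt with rfl | h1
    · rw [hwN]; ring
    · rw [hw0 m h1]
      rcases h2.eq_or_lt with rfl | h2
      · rw [hlast]; ring
      · rw [eval_Qp_eq_zero A N x h1 h2]; ring

/-- The left vector applied to a column of `scrL` is a multiple of the first entry of the
corresponding transformed left vector. -/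
lemma sum_leftPoly_mul_scrL {p : ℕ} {α : ℕ → ℝ} (N : ℕ) (x : ℝ) (c : Fin p) :
    ∑ b : Fin p, eval x (leftPoly p α N 1 b) * scrL p α b c
      = (1 / ∏ t ∈ Finset.range (c : ℕ), α ((c : ℕ) + 1 + t * p))
        * eval x (bidiagPoly p α N N (p - c)) := by
  have hp : 0 < p := c.pos
  have hlp : eval x (bidiagPoly p α N N (p - c))
      = eval x (leftPoly p α N (c + 1) ((⟨0, hp⟩ : Fin p) : ℕ)) := by
    simp [leftPoly]
  have hs : ∀ b : Fin p, scrL p α b c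
      = (1 / ∏ t ∈ Finset.range (c : ℕ), α ((c : ℕ) + 1 + t * p))
        * ((List.range (c : ℕ)).map fun k => Lmat p p (k + 1) α).prod b ⟨0, hp⟩ := by
    intro b
    have hl : ((List.range' 1 (c : ℕ)).map fun j => Lmat p p j α)
        = (List.range (c : ℕ)).map fun k => Lmat p p (k + 1) α := by
      rw [List.range'_eq_map_range, List.map_map]
      congr 1
      funext k
      simp [add_comm]
    have he : (fun j : Fin p => if (j : ℕ) = 0 then (1 : ℝ) else 0)
        = Pi.single (⟨0, hp⟩ : Fin p) 1 := by
      funext j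
      simp [Pi.single_apply, Fin.ext_iff]
    rw [scrL, Matrix.of_apply, hl, he, Matrix.mulVec_single_one]
    split_ifs with h1 h2
    · simp [h1, Matrix.one_apply, Fin.ext_iff, h2]
    · simp [h1, Fin.ext_iff, h2]
    · rfl
  rw [hlp, ← vecMul_prod_Lmat x p α N p c c.2.le ⟨0, hp⟩ (Or.inr (by simp)), Matrix.vecMul,
    dotProduct, Finset.mul_sum]
  refine Finset.sum_congr rfl fun b _ => ?_
  rw [hs]
  ring

theorem stmt_12
    (p : ℕ) (hp : 1 ≤ p)
    (T : ℕ → ℕ → ℝ)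
    (hT1 : ∀ n, T n (n + 1) = 1)
    (hTsup : ∀ n m, n + 1 < m → T n m = 0)
    (hTsub : ∀ n m, m + p < n → T n m = 0)
    (hTlow : ∀ n, p ≤ n → T n (n - p) ≠ 0)
    (B : ℕ → Polynomial ℝ)
    (hB0 : B 0 = 1)
    (hBrec : ∀ n, B (n + 1) = (X - C (T n n)) * B n
      - ∑ j ∈ Finset.Icc 1 p, (if j ≤ n then C (T n (n - j)) * B (n - j) else 0))
    (A : Fin p → ℕ → Polynomial ℝ)
    (hAconst : ∀ a : Fin p, ∀ j < p, ∃ c : ℝ, A a j = C c)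
    (hAzero : ∀ a : Fin p, ∀ j : ℕ, j < (a : ℕ) → A a j = 0)
    (hAone : ∀ a : Fin p, A a (a : ℕ) = 1)
    (hArec : ∀ a : Fin p, ∀ n : ℕ,
      (if n = 0 then 0 else A a (n - 1))
        + ∑ i ∈ Finset.range (p + 1), C (T (n + i) n) * A a (n + i) = X * A a n)
    (N : ℕ) (lam : Fin (N + 1) → ℝ)
    (hroots : ∀ k, eval (lam k) (B (N + 1)) = 0)
    (hanti : StrictAnti lam)
    (hsimple : ∀ k, eval (lam k) (derivative (B (N + 1))) ≠ 0)
    (hden : ∀ k : Fin (N + 1), ∑ l ∈ Finset.range (N + 1),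
      eval (lam k) (Qp p A l N) * eval (lam k) (B l) ≠ 0)
    (α : ℕ → ℝ) (hα : ∀ i, 1 ≤ i → 0 < α i)
    (hfact : truncM T N =
      (((List.range p).map fun k => Lmat p (N + 1) (k + 1) α).prod) * Umat p (N + 1) α)
    (Ccal : Matrix (Fin p) (Fin p) ℝ)
    (hCdiag : ∀ i : Fin p, Ccal i i = 1)
    (hCtri : ∀ i j : Fin p, j < i → Ccal i j = 0)
    (hCnn : ∀ i j : Fin p, 0 ≤ Ccal i j)
    (hnu : Matrix.transpose ((nuMat p A)⁻¹) = scrL p α * Ccal) :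
    ∀ (k : Fin (N + 1)) (a : Fin p), 0 < mu p A B N lam k a := by
  intro k a
  have hB := fun n (hn : n ≤ N) => X_mul_typeII hT1 hTsup hTsub hBrec hn
  have hP : bidiagPoly p α N (N + 1) 0 = B (N + 1) :=
    bidiagPoly_eq_typeII hB0 hB fun x n hn => sum_leftPoly_mul p N T α hfact x hn
  set x := lam k with hx
  have hleft : ∀ n ≤ N, ∑ m ∈ Finset.range (N + 1), eval x (leftPoly p α N 1 m) * T m n
      = x * eval x (leftPoly p α N 1 n) := by
    intro n hn
    rw [sum_leftPoly_mul p N T α hfact x hn, hP, hroots k]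
    simp
  have hQ : ∀ m ≤ N + p, eval x (Qp p A m N)
      = eval x (Qp p A N N) * eval x (leftPoly p α N 1 m) := fun m hm =>
    eval_Qp_eq_mul_leftPoly hp hT1 hTsup hTsub hTlow hAconst hAzero hAone hArec hleft hm
  have hsum : ∑ l ∈ Finset.range (N + 1), eval x (Qp p A l N) * eval x (B l)
      = eval x (Qp p A N N) * eval x (derivative (B (N + 1))) := by
    rw [← sum_leftPoly_mul_typeII hB hleft, Finset.mul_sum]
    refine Finset.sum_congr rfl fun l hl => ?_
    rw [Finset.mem_range] at hl
    rw [hQ l (by omega), mul_assoc]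
  have hQN : eval x (Qp p A N N) ≠ 0 := fun h0 => hden k (by rw [hsum, h0, zero_mul])
  have hwfun : ∀ b : Fin p, wfun p A B N lam k b
      = eval x (leftPoly p α N 1 b) / eval x (derivative (B (N + 1))) := by
    intro b
    rw [wfun, hsum, hQ b (by omega), mul_div_mul_left _ _ hQN]
  have hcol : ∀ c : Fin p, 0 < ∑ b : Fin p, scrL p α b c * wfun p A B N lam k b := by
    intro c
    have h1 : ∑ b : Fin p, scrL p α b c * wfun p A B N lam k b
        = (1 / ∏ t ∈ Finset.range (c : ℕ), α ((c : ℕ) + 1 + t * p))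
          * (eval x (bidiagPoly p α N N (p - c)) / eval x (derivative (B (N + 1)))) := by
      rw [← mul_div_assoc, ← sum_leftPoly_mul_scrL, Finset.sum_div]
      refine Finset.sum_congr rfl fun b _ => ?_
      rw [hwfun]
      ring
    have h2 := evalWronskian_bidiagPoly_pos x hp hα N (Nat.sub_le p c)
    rw [evalWronskian_apply, hP, hroots k, mul_zero, sub_zero] at h2
    rw [h1]
    refine mul_pos (one_div_pos.2 (Finset.prod_pos fun t _ => hα _ (by omega))) ?_
    rcases mul_pos_iff.1 h2 with h | h
    · exact div_pos h.1 h.2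
    · exact div_pos_of_neg_of_neg h.1 h.2
  have hmu : mu p A B N lam k a
      = ∑ c : Fin p, (∑ b : Fin p, scrL p α b c * wfun p A B N lam k b) * Ccal c a := by
    have hinv : ∀ b : Fin p, (nuMat p A)⁻¹ a b = ∑ c : Fin p, scrL p α b c * Ccal c a := fun b =>
      congrFun (congrFun hnu b) a
    simp only [mu, hinv, Finset.sum_mul]
    rw [Finset.sum_comm]
    exact Finset.sum_congr rfl fun c _ => Finset.sum_congr rfl fun b _ => by ring
  rw [hmu]
  refine Finset.sum_pos' (fun c _ => mul_nonneg (hcol c).le (hCnn c a))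
    ⟨a, Finset.mem_univ a, ?_⟩
  rw [hCdiag a, mul_one]
  exact hcol a
end

section
/- (Weyl functions) Assume B_{N+1} has N+1 simple real zeros λ_1 > ⋯ > λ_{N+1}. Then for every real z that is not a zero of B_{N+1} and every a ∈ {1,…,p}: e_1ᵀ·(z·I_{N+1} − T^{[N]})^{−1}·e^ν_a = B^{(a)}_{N+1}(z)/B_{N+1}(z) = Σ_{n=1}^{N+1} μ_{n,a}/(z − λ_n). -/
open Polynomial

noncomputable def Btr (T : ℕ → ℕ → ℝ) (N k : ℕ) : Polynomial ℝ :=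
  if k ≤ N + 1 then
    (Matrix.of fun i j : Fin (N + 1 - k) => T (k + (i : ℕ)) (k + (j : ℕ))).charpoly
  else 0

noncomputable def enu (p : ℕ) (A : Fin p → ℕ → Polynomial ℝ) (N : ℕ) (a : Fin p) :
    Fin (N + 1) → ℝ :=
  fun j => if hj : (j : ℕ) < p then (nuMat p A)⁻¹ a ⟨(j : ℕ), hj⟩ else 0

noncomputable def Bsec (p : ℕ) (T : ℕ → ℕ → ℝ) (A : Fin p → ℕ → Polynomial ℝ)
    (N : ℕ) (a : Fin p) : Polynomial ℝ :=
  ∑ b : Fin p, Polynomial.C ((nuMat p A)⁻¹ a b) * Btr T N ((b : ℕ) + 1)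

/-- The minor of a lower Hessenberg matrix with superdiagonal entries `-1`, obtained by deleting
row `j` and the first column. -/
lemma det_minor_of_hessenberg {R : Type*} [CommRing R] (H : ℕ → ℕ → R)
    (hdiag : ∀ n, H n (n + 1) = -1) (hsup : ∀ n m, n + 1 < m → H n m = 0)
    (n k : ℕ) (j : Fin (n + 1)) :
    ((Matrix.of fun i l : Fin (n + 1) => H (k + i) (k + l)).submatrix j.succAbove Fin.succ).det
      = (-1) ^ (j : ℕ) *
        (Matrix.of fun i l : Fin (n - j) => H (k + j + 1 + i) (k + j + 1 + l)).det := by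
  induction n generalizing k with
  | zero =>
    obtain rfl : j = 0 := Fin.ext (by omega)
    simp
  | succ n ih =>
    refine Fin.cases ?_ (fun j => ?_) j
    · simp only [Fin.val_zero, pow_zero, one_mul, Fin.succAbove_zero]
      congr 1
      ext i l
      simp only [Matrix.submatrix_apply, Matrix.of_apply, Fin.val_succ]
      congr 1 <;> omega
    · rw [Matrix.det_succ_row_zero, Finset.sum_eq_single 0]
      · have hsub : (((Matrix.of fun i l : Fin (n + 1 + 1) => H (k + i) (k + l)).submatrix
            j.succ.succAbove Fin.succ).submatrix Fin.succ (Fin.succAbove 0))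
            = (Matrix.of fun i l : Fin (n + 1) => H (k + 1 + i) (k + 1 + l)).submatrix
              j.succAbove Fin.succ := by
          ext i l
          simp only [Matrix.submatrix_apply, Matrix.of_apply, Fin.val_succ,
            Fin.succ_succAbove_succ, Fin.succAbove_zero]
          congr 1 <;> omega
        rw [hsub, ih (k + 1) j]
        have hsz : n + 1 - (j.succ : ℕ) = n - j := by simp
        have hk : k + (j.succ : ℕ) = k + 1 + j := by simp; omega
        rw [hsz, hk]
        simp [hdiag, pow_succ]
      · intro l _ hl
        have : 0 < (l : ℕ) := Nat.pos_of_ne_zero fun h => hl (Fin.ext h)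
        have h0 : H k (k + (l + 1)) = 0 := hsup _ _ (by omega)
        simp [h0]
      · simp

/-- The first row of the adjugate of `z - T^{[N]}` consists of the truncated polynomials. -/
lemma adjugate_smul_one_sub_truncM_zero (T : ℕ → ℕ → ℝ) (hT1 : ∀ n, T n (n + 1) = 1)
    (hTsup : ∀ n m, n + 1 < m → T n m = 0) (N : ℕ) (z : ℝ) (j : Fin (N + 1)) :
    (z • (1 : Matrix (Fin (N + 1)) (Fin (N + 1)) ℝ) - truncM T N).adjugate 0 j
      = eval z (Btr T N ((j : ℕ) + 1)) := by
  have key := det_minor_of_hessenberg (fun i l => (if i = l then z else 0) - T i l)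
    (fun n => by simp [hT1]) (fun n m h => by
      have : n ≠ m := by omega
      simp [hTsup n m h, this]) N 0 j
  have hM : (z • (1 : Matrix (Fin (N + 1)) (Fin (N + 1)) ℝ) - truncM T N)
      = Matrix.of fun i l : Fin (N + 1) =>
        (fun i l => (if i = l then z else 0) - T i l) (0 + (i : ℕ)) (0 + (l : ℕ)) := by
    ext i l
    simp [truncM, Matrix.one_apply, Fin.ext_iff]
  rw [Matrix.adjugate_fin_succ_eq_det_submatrix, hM, Fin.succAbove_zero, key, ← mul_assoc,
    Fin.val_zero, add_zero, ← pow_add, Even.neg_one_pow ⟨_, rfl⟩, one_mul, Btr,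
    if_pos (by omega), Matrix.eval_charpoly]
  have hsz : N + 1 - ((j : ℕ) + 1) = N - j := by omega
  rw [hsz]
  congr 1
  ext i l
  simp [Matrix.diagonal_apply, Fin.ext_iff]

/-- The recurrence of the type II polynomials, read as a truncated eigenvalue equation. -/
lemma sum_mul_eval_typeII (p : ℕ) (T : ℕ → ℕ → ℝ) (hT1 : ∀ n, T n (n + 1) = 1)
    (hTsup : ∀ n m, n + 1 < m → T n m = 0) (hTsub : ∀ n m, m + p < n → T n m = 0)
    (B : ℕ → Polynomial ℝ)
    (hBrec : ∀ n, B (n + 1) = (X - C (T n n)) * B n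
      - ∑ j ∈ Finset.Icc 1 p, (if j ≤ n then C (T n (n - j)) * B (n - j) else 0))
    (x : ℝ) (n N : ℕ) (hn : n ≤ N) :
    ∑ m ∈ Finset.range (N + 1), T n m * eval x (B m)
      = x * eval x (B n) - if n = N then eval x (B (N + 1)) else 0 := by
  have hlow : ∑ m ∈ Finset.range n, T n m * eval x (B m)
      = ∑ j ∈ Finset.Icc 1 p, if j ≤ n then T n (n - j) * eval x (B (n - j)) else 0 := by
    rw [← Finset.sum_filter]
    symm
    refine Finset.sum_of_injOn (fun j => n - j) ?_ ?_ ?_ ?_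
    · intro a ha b hb hab
      simp only [Finset.coe_filter, Finset.mem_Icc, Set.mem_ofPred_eq] at ha hb hab
      omega
    · intro a ha
      simp only [Finset.coe_filter, Finset.mem_Icc, Set.mem_ofPred_eq] at ha
      simp only [Finset.coe_range, Set.mem_Iio]
      omega
    · intro m hm hm'
      rw [hTsub n m, zero_mul]
      by_contra hlt
      rw [Finset.mem_range] at hm
      refine hm' ⟨n - m, ?_, ?_⟩
      · simp only [Finset.coe_filter, Finset.mem_Icc, Set.mem_ofPred_eq]
        omega
      · change n - (n - m) = m
        omega
    · intro j _
      rfl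
  have hfull : ∑ m ∈ Finset.range (n + 2), T n m * eval x (B m) = x * eval x (B n) := by
    rw [Finset.sum_range_succ, Finset.sum_range_succ, hlow, hT1, hBrec n]
    have : ∀ j, eval x (if j ≤ n then C (T n (n - j)) * B (n - j) else 0)
        = if j ≤ n then T n (n - j) * eval x (B (n - j)) else 0 := by
      intro j
      split_ifs <;> simp
    simp only [eval_sub, eval_mul, eval_X, eval_C, eval_finsetSum, this]
    ring
  rcases hn.eq_or_lt with rfl | hlt
  · rw [Finset.sum_range_succ, hT1] at hfull
    rw [if_pos rfl]
    linarith
  · rw [if_neg hlt.ne, sub_zero, ← hfull]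
    symm
    refine Finset.sum_subset (Finset.range_mono (by omega)) fun m _ hm => ?_
    rw [Finset.mem_range] at hm
    rw [hTsup n m (by omega), zero_mul]

/-- A solution of the type I recurrence, read as an eigenvalue equation for a long enough
truncation. -/
lemma sum_mul_typeI (p : ℕ) (T : ℕ → ℕ → ℝ) (hT1 : ∀ n, T n (n + 1) = 1)
    (hTsup : ∀ n m, n + 1 < m → T n m = 0) (hTsub : ∀ n m, m + p < n → T n m = 0)
    (α : ℕ → ℝ) (x : ℝ) (n : ℕ)
    (hα : (if n = 0 then 0 else α (n - 1))
      + ∑ i ∈ Finset.range (p + 1), T (n + i) n * α (n + i) = x * α n)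
    (K : ℕ) (hK : n + p < K) :
    ∑ j ∈ Finset.range K, T j n * α j = x * α n := by
  have hsub : ∑ j ∈ Finset.range K, T j n * α j
      = ∑ j ∈ Finset.range (n + (p + 1)), T j n * α j := by
    symm
    refine Finset.sum_subset (Finset.range_mono (by omega)) fun m _ hm => ?_
    rw [Finset.mem_range] at hm
    rw [hTsub m n (by omega), zero_mul]
  rw [hsub, Finset.sum_range_add, ← hα]
  congr 1
  cases n with
  | zero => simp
  | succ n =>
    rw [Finset.sum_range_succ, hT1, Finset.sum_eq_zero]
    · simp
    · intro m hm
      rw [Finset.mem_range] at hm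
      rw [hTsup m (n + 1) (by omega), zero_mul]

/-- At a fixed point, `Q_{n,N}` is a fixed linear combination of the type I polynomials. -/
lemma exists_eval_Qp_eq_sum (p : ℕ) (hp : 1 ≤ p) (A : Fin p → ℕ → Polynomial ℝ) (N : ℕ)
    (x : ℝ) : ∃ c : Fin p → ℝ, ∀ n, eval x (Qp p A n N) = ∑ a, c a * eval x (A a n) := by
  obtain ⟨p, rfl⟩ := Nat.exists_eq_add_of_le' hp
  refine ⟨fun a => (-1) ^ (a : ℕ) * eval x (Matrix.det (Matrix.of fun i b : Fin p =>
    A (a.succAbove b) (N + (i + 1 : ℕ)))), fun n => ?_⟩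
  rw [Qp, Matrix.det_succ_row_zero, eval_finsetSum]
  refine Finset.sum_congr rfl fun a _ => ?_
  have : (Matrix.of fun i a : Fin (p + 1) =>
      if (i : ℕ) = 0 then A a n else A a (N + (i : ℕ))).submatrix Fin.succ a.succAbove
      = Matrix.of fun i b : Fin p => A (a.succAbove b) (N + (i + 1 : ℕ)) := by
    ext i b
    simp
  rw [this]
  simp
  ring

lemma Qp_eq_zero (p : ℕ) (A : Fin p → ℕ → Polynomial ℝ) (N n : ℕ) (h1 : N < n)
    (h2 : n < N + p) : Qp p A n N = 0 := by
  refine Matrix.det_zero_of_row_eq (i := ⟨0, by omega⟩) (j := ⟨n - N, by omega⟩) ?_ ?_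
  · intro h
    have := congrArg Fin.val h
    simp only at this
    omega
  · ext1 a
    have h3 : n - N ≠ 0 := by omega
    have h4 : N + (n - N) = n := by omega
    simp [h3, h4]

/-- `Q_{N+p,N}` vanishes at the zeros of `B_{N+1}`. -/
lemma eval_Qp_add_eq_zero (p : ℕ) (hp : 1 ≤ p) (T : ℕ → ℕ → ℝ)
    (hTsub : ∀ n m, m + p < n → T n m = 0)
    (hTlow : ∀ n, p ≤ n → T n (n - p) ≠ 0)
    (A : Fin p → ℕ → Polynomial ℝ) (N : ℕ) (x : ℝ)
    (hA : ∀ a n K, n + p < K →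
      ∑ j ∈ Finset.range K, T j n * eval x (A a j) = x * eval x (A a n))
    (β : ℕ → ℝ) (hβ0 : β 0 = 1)
    (hβ : ∀ n ≤ N, ∑ m ∈ Finset.range (N + 1), T n m * β m = x * β n) :
    eval x (Qp p A (N + p) N) = 0 := by
  set c : ℕ → ℝ := fun n => ∑ m ∈ Finset.range (N + 1), T n m * β m with hc
  have hdep : ∀ a, ∑ i ∈ Finset.range p, c (N + 1 + i) * eval x (A a (N + 1 + i)) = 0 := by
    intro a
    have h1 : ∑ n ∈ Finset.range (N + 1 + p), c n * eval x (A a n)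
        = ∑ m ∈ Finset.range (N + 1), x * eval x (A a m) * β m := by
      simp only [hc, Finset.sum_mul]
      rw [Finset.sum_comm]
      refine Finset.sum_congr rfl fun m hm => ?_
      rw [Finset.mem_range] at hm
      rw [← hA a m (N + 1 + p) (by omega), Finset.sum_mul]
      exact Finset.sum_congr rfl fun _ _ => by ring
    rw [Finset.sum_range_add] at h1
    have h2 : ∑ n ∈ Finset.range (N + 1), c n * eval x (A a n)
        = ∑ m ∈ Finset.range (N + 1), x * eval x (A a m) * β m := by
      refine Finset.sum_congr rfl fun m hm => ?_
      rw [Finset.mem_range] at hm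
      rw [show c m = x * β m from hβ m (by omega)]
      ring
    linarith
  have hne : ∃ i < p, c (N + 1 + i) ≠ 0 := by
    by_contra! hzero
    have hall : ∀ n, N < n → c n = 0 := by
      intro n hn
      rcases lt_or_ge n (N + 1 + p) with h | h
      · obtain ⟨i, rfl⟩ := Nat.exists_eq_add_of_le (show N + 1 ≤ n from hn)
        exact hzero i (by omega)
      · refine Finset.sum_eq_zero fun m hm => ?_
        rw [Finset.mem_range] at hm
        rw [hTsub n m (by omega), zero_mul]
    have hvan : ∀ d m, m ≤ N → N - m = d → β m = 0 := by
      intro d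
      induction d using Nat.strong_induction_on with
      | _ d ih =>
        intro m hm hd
        have hlater : ∀ m' ≤ N, m < m' → β m' = 0 := fun m' h h' =>
          ih (N - m') (by omega) m' h rfl
        have hsingle : c (m + p) = T (m + p) m * β m := by
          refine Finset.sum_eq_single m (fun m' hm' hne => ?_) (fun h => ?_)
          · rw [Finset.mem_range] at hm'
            rcases lt_or_gt_of_ne hne with h | h
            · rw [hTsub _ _ (by omega), zero_mul]
            · rw [hlater m' (by omega) h, mul_zero]
          · rw [Finset.mem_range] at h
            omega
        have hcz : c (m + p) = 0 := by
          rcases le_or_gt (m + p) N with h | h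
          · rw [show c (m + p) = x * β (m + p) from hβ _ h, hlater _ h (by omega), mul_zero]
          · exact hall _ h
        have hT := hTlow (m + p) (by omega)
        rw [Nat.add_sub_cancel] at hT
        rw [hcz] at hsingle
        exact (mul_eq_zero.mp hsingle.symm).resolve_left hT
    exact one_ne_zero (hβ0.symm.trans (hvan N 0 (by omega) (by omega)))
  obtain ⟨p, rfl⟩ := Nat.exists_eq_add_of_le' hp
  rw [Qp, ← coe_evalRingHom, RingHom.map_det]
  refine Matrix.exists_vecMul_eq_zero_iff.mp
    ⟨fun i => if (i : ℕ) = 0 then c (N + (p + 1)) else c (N + i), fun hv => ?_, ?_⟩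
  · obtain ⟨i, hi, hci⟩ := hne
    apply hci
    rcases (Nat.lt_succ_iff.mp hi).eq_or_lt with rfl | hlt
    · have := congrFun hv 0
      simp only [Fin.val_zero, if_true, Pi.zero_apply] at this
      rw [← this]
      congr 1
      ring
    · have := congrFun hv ⟨i + 1, by omega⟩
      simp only [Nat.succ_ne_zero, if_false, Pi.zero_apply] at this
      rw [← this]
      congr 1
      ring
  · ext a
    have h := hdep a
    rw [Finset.sum_range_succ, ← Fin.sum_univ_eq_sum_range
      (fun i => c (N + 1 + i) * eval x (A a (N + 1 + i)))] at h
    rw [Matrix.vecMul, dotProduct, Fin.sum_univ_succ, add_comm]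
    simpa [add_assoc, add_comm, add_left_comm] using h

/-- Sums over the first `p` indices agree with sums over `Fin (N + 1)`, when the summand is
supported on both ranges. -/
lemma sum_fin_dite_eq_sum_fin (p N : ℕ) (g : Fin p → ℝ) (f : ℕ → ℝ)
    (hf : ∀ b, N < b → b < p → f b = 0) :
    ∑ j : Fin (N + 1), f j * (if hj : (j : ℕ) < p then g ⟨j, hj⟩ else 0)
      = ∑ b : Fin p, g b * f b := by
  let G : ℕ → ℝ := fun j => if hj : j < p then g ⟨j, hj⟩ else 0
  have hR : ∑ b : Fin p, g b * f b = ∑ b ∈ Finset.range p, f b * G b := by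
    rw [← Fin.sum_univ_eq_sum_range (fun b => f b * G b)]
    exact Finset.sum_congr rfl fun b _ => by simp [G, mul_comm]
  rw [hR, Fin.sum_univ_eq_sum_range (fun j => f j * G j)]
  rcases le_total (N + 1) p with h | h
  · refine Finset.sum_subset (Finset.range_mono h) fun m hm hm' => ?_
    rw [Finset.mem_range] at hm hm'
    rw [hf m (by omega) hm, zero_mul]
  · refine (Finset.sum_subset (Finset.range_mono h) fun m hm hm' => ?_).symm
    rw [Finset.mem_range] at hm hm'
    simp [G, hm']

/-- Spectral decomposition of the resolvent of a square matrix from biorthogonal systems of left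
and right eigenvectors with distinct eigenvalues. -/
lemma inv_smul_one_sub_eq_of_eigenvectors {ι K : Type*} [Fintype ι] [DecidableEq ι] [Field K]
    (M U W : Matrix ι ι K) (lam : ι → K) (hinj : Function.Injective lam)
    (hU : M * U = U * Matrix.diagonal lam) (hW : W * M = Matrix.diagonal lam * W)
    (hWU : ∀ k, (W * U) k k = 1) (z : K) (hz : ∀ k, z ≠ lam k) :
    (z • (1 : Matrix ι ι K) - M)⁻¹ = U * Matrix.diagonal (fun k => (z - lam k)⁻¹) * W := by
  have hone : W * U = 1 := by
    ext k l
    rcases eq_or_ne k l with rfl | hkl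
    · rw [hWU, Matrix.one_apply_eq]
    · rw [Matrix.one_apply_ne hkl]
      have h : Matrix.diagonal lam * (W * U) = (W * U) * Matrix.diagonal lam := by
        rw [← Matrix.mul_assoc, ← hW, Matrix.mul_assoc, hU, Matrix.mul_assoc]
      have hkl' := congrFun (congrFun h k) l
      rw [Matrix.diagonal_mul, Matrix.mul_diagonal] at hkl'
      have hsub : (lam k - lam l) * (W * U) k l = 0 := by linear_combination hkl'
      exact (mul_eq_zero.mp hsub).resolve_left (sub_ne_zero.mpr (hinj.ne hkl))
  have hUW : U * W = 1 := mul_eq_one_comm.mp hone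
  have hD : W * (z • (1 : Matrix ι ι K) - M) = Matrix.diagonal (fun k => z - lam k) * W := by
    rw [Matrix.mul_sub, hW, Matrix.mul_smul, Matrix.mul_one]
    ext k l
    simp [Matrix.diagonal_mul, sub_mul]
  have hDD : Matrix.diagonal (fun k => (z - lam k)⁻¹) * Matrix.diagonal (fun k => z - lam k)
      = 1 := by
    rw [Matrix.diagonal_mul_diagonal, ← Matrix.diagonal_one]
    congr 1
    ext k
    exact inv_mul_cancel₀ (sub_ne_zero.mpr (hz k))
  refine Matrix.inv_eq_left_inv ?_
  rw [Matrix.mul_assoc, hD, ← Matrix.mul_assoc, Matrix.mul_assoc U, hDD, Matrix.mul_one, hUW]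

theorem stmt_17
    (p : ℕ) (hp : 1 ≤ p)
    (T : ℕ → ℕ → ℝ)
    (hT1 : ∀ n, T n (n + 1) = 1)
    (hTsup : ∀ n m, n + 1 < m → T n m = 0)
    (hTsub : ∀ n m, m + p < n → T n m = 0)
    (hTlow : ∀ n, p ≤ n → T n (n - p) ≠ 0)
    (B : ℕ → Polynomial ℝ)
    (hB0 : B 0 = 1)
    (hBrec : ∀ n, B (n + 1) = (X - C (T n n)) * B n
      - ∑ j ∈ Finset.Icc 1 p, (if j ≤ n then C (T n (n - j)) * B (n - j) else 0))
    (A : Fin p → ℕ → Polynomial ℝ)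
    (hAconst : ∀ a : Fin p, ∀ j < p, ∃ c : ℝ, A a j = C c)
    (hAzero : ∀ a : Fin p, ∀ j : ℕ, j < (a : ℕ) → A a j = 0)
    (hAone : ∀ a : Fin p, A a (a : ℕ) = 1)
    (hArec : ∀ a : Fin p, ∀ n : ℕ,
      (if n = 0 then 0 else A a (n - 1))
        + ∑ i ∈ Finset.range (p + 1), C (T (n + i) n) * A a (n + i) = X * A a n)
    (N : ℕ) (lam : Fin (N + 1) → ℝ)
    (hroots : ∀ k, eval (lam k) (B (N + 1)) = 0)
    (hanti : StrictAnti lam)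
    (hsimple : ∀ k, eval (lam k) (derivative (B (N + 1))) ≠ 0)
    (hden : ∀ k : Fin (N + 1), ∑ l ∈ Finset.range (N + 1),
      eval (lam k) (Qp p A l N) * eval (lam k) (B l) ≠ 0) :
    ∀ z : ℝ, eval z (B (N + 1)) ≠ 0 → ∀ a : Fin p,
      Matrix.mulVec ((z • (1 : Matrix (Fin (N + 1)) (Fin (N + 1)) ℝ) - truncM T N)⁻¹)
          (enu p A N a) 0
        = eval z (Bsec p T A N a) / eval z (B (N + 1)) ∧
      eval z (Bsec p T A N a) / eval z (B (N + 1))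
        = ∑ n : Fin (N + 1), mu p A B N lam n a / (z - lam n) := by
  intro z hz a
  have hII := sum_mul_eval_typeII p T hT1 hTsup hTsub B hBrec
  have hdet : (z • (1 : Matrix (Fin (N + 1)) (Fin (N + 1)) ℝ) - truncM T N).det
      = eval z (B (N + 1)) := by
    have hMb : Matrix.mulVec (z • (1 : Matrix (Fin (N + 1)) (Fin (N + 1)) ℝ) - truncM T N)
        (fun m => eval z (B m)) = Pi.single (Fin.last N) (eval z (B (N + 1))) := by
      ext n
      rw [Matrix.sub_mulVec, Matrix.smul_mulVec, Matrix.one_mulVec]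
      have h := hII z n N (Nat.lt_succ_iff.mp n.isLt)
      rw [← Fin.sum_univ_eq_sum_range (fun m => T n m * eval z (B m))] at h
      simp only [Pi.sub_apply, Pi.smul_apply, smul_eq_mul, Matrix.mulVec, dotProduct, truncM,
        Matrix.of_apply, h, Pi.single_apply, Fin.ext_iff, Fin.val_last]
      ring
    have h := congrArg (fun v => Matrix.mulVec
      (z • (1 : Matrix (Fin (N + 1)) (Fin (N + 1)) ℝ) - truncM T N).adjugate v 0) hMb
    simp only [Matrix.mulVec_mulVec, Matrix.adjugate_mul, Matrix.smul_mulVec,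
      Matrix.one_mulVec, Pi.smul_apply, Fin.val_zero, hB0, eval_one, smul_eq_mul, mul_one,
      Matrix.mulVec_single, adjugate_smul_one_sub_truncM_zero T hT1 hTsup, Matrix.col_apply,
      MulOpposite.smul_eq_mul_unop, MulOpposite.unop_op] at h
    have hlast : Btr T N (((Fin.last N : Fin (N + 1)) : ℕ) + 1) = 1 := by
      rw [Fin.val_last, Btr, if_pos le_rfl]
      have : IsEmpty (Fin (N + 1 - (N + 1))) := by
        rw [Nat.sub_self]
        infer_instance
      exact Matrix.det_isEmpty
    rw [hlast, eval_one, one_mul] at h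
    exact h
  have hfirst : Matrix.mulVec ((z • (1 : Matrix (Fin (N + 1)) (Fin (N + 1)) ℝ) - truncM T N)⁻¹)
      (enu p A N a) 0 = eval z (Bsec p T A N a) / eval z (B (N + 1)) := by
    have hsum := sum_fin_dite_eq_sum_fin p N (fun b => (nuMat p A)⁻¹ a b)
      (fun b => eval z (Btr T N (b + 1))) (fun b hb _ => by
        rw [Btr, if_neg (by omega), eval_zero])
    rw [Matrix.inv_def, Ring.inverse_eq_inv', hdet, Matrix.smul_mulVec, Pi.smul_apply,
      smul_eq_mul, div_eq_inv_mul]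
    congr 1
    simp only [Bsec, eval_finsetSum, eval_mul, eval_C]
    rw [← hsum]
    simp only [Matrix.mulVec, dotProduct, adjugate_smul_one_sub_truncM_zero T hT1 hTsup, enu]
  refine ⟨hfirst, hfirst.symm.trans ?_⟩
  have hright : ∀ k, ∀ n ≤ N, ∑ m ∈ Finset.range (N + 1), T n m * eval (lam k) (B m)
      = lam k * eval (lam k) (B n) := by
    intro k n hn
    rw [hII _ n N hn, hroots]
    simp
  have hAeval : ∀ x a n K, n + p < K →
      ∑ j ∈ Finset.range K, T j n * eval x (A a j) = x * eval x (A a n) := by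
    intro x a n K hK
    refine sum_mul_typeI p T hT1 hTsup hTsub (fun j => eval x (A a j)) x n ?_ K hK
    have h := congrArg (eval x) (hArec a n)
    simp only [eval_add, eval_finsetSum, eval_mul, eval_C, eval_X] at h
    rw [← h]
    congr 1
    split_ifs <;> simp
  have hleft : ∀ k, ∀ m ≤ N, ∑ j ∈ Finset.range (N + 1), eval (lam k) (Qp p A j N) * T j m
      = lam k * eval (lam k) (Qp p A m N) := by
    intro k m hm
    have hlong : ∑ j ∈ Finset.range (N + 1 + p), eval (lam k) (Qp p A j N) * T j m
        = lam k * eval (lam k) (Qp p A m N) := by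
      obtain ⟨c, hc⟩ := exists_eval_Qp_eq_sum p hp A N (lam k)
      simp only [hc, Finset.sum_mul, Finset.mul_sum]
      rw [Finset.sum_comm]
      refine Finset.sum_congr rfl fun b _ => ?_
      rw [mul_left_comm, ← hAeval (lam k) b m (N + 1 + p) (by omega), Finset.mul_sum]
      exact Finset.sum_congr rfl fun _ _ => by ring
    rw [← hlong]
    refine Finset.sum_subset (Finset.range_mono (by omega)) fun j hj hj' => ?_
    rw [Finset.mem_range] at hj hj'
    rcases (show j ≤ N + p by omega).eq_or_lt with rfl | hlt
    · rw [eval_Qp_add_eq_zero p hp T hTsub hTlow A N (lam k) (hAeval (lam k))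
        (fun m => eval (lam k) (B m)) (by simp [hB0]) (hright k), zero_mul]
    · rw [Qp_eq_zero p A N j (by omega) hlt, eval_zero, zero_mul]
  have hzlam : ∀ k, z ≠ lam k := fun k h => hz (h ▸ hroots k)
  have hinv := inv_smul_one_sub_eq_of_eigenvectors (truncM T N)
    (Matrix.of fun n k => eval (lam k) (B (n : ℕ)))
    (Matrix.of fun k n => wfun p A B N lam k (n : ℕ)) lam hanti.injective
    (by
      ext n k
      have h := hright k n (Nat.lt_succ_iff.mp n.isLt)
      rw [← Fin.sum_univ_eq_sum_range (fun m => T n m * eval (lam k) (B m))] at h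
      rw [Matrix.mul_diagonal, Matrix.mul_apply]
      simp only [truncM, Matrix.of_apply, h, mul_comm])
    (by
      ext k m
      have h := hleft k m (Nat.lt_succ_iff.mp m.isLt)
      rw [← Fin.sum_univ_eq_sum_range (fun j => eval (lam k) (Qp p A j N) * T j m)] at h
      rw [Matrix.diagonal_mul, Matrix.mul_apply]
      simp only [truncM, Matrix.of_apply, wfun, div_mul_eq_mul_div]
      rw [← Finset.sum_div, h, mul_div_assoc])
    (fun k => by
      rw [Matrix.mul_apply]
      simp only [Matrix.of_apply, wfun, div_mul_eq_mul_div]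
      rw [← Finset.sum_div, Fin.sum_univ_eq_sum_range
        (fun j => eval (lam k) (Qp p A j N) * eval (lam k) (B j)), div_self (hden k)])
    z hzlam
  rw [hinv, ← Matrix.mulVec_mulVec, Matrix.mulVec, dotProduct]
  refine Finset.sum_congr rfl fun k _ => ?_
  have hsum := sum_fin_dite_eq_sum_fin p N (fun b => (nuMat p A)⁻¹ a b)
    (fun b => wfun p A B N lam k b) (fun b hb hb' => by
      rw [wfun, Qp_eq_zero p A N b hb (by omega), eval_zero, zero_div])
  rw [Matrix.mul_diagonal, Matrix.of_apply, Fin.val_zero, hB0, eval_one, one_mul, mu, ← hsum,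
    div_eq_inv_mul]
  simp only [Matrix.mulVec, dotProduct, Matrix.of_apply, enu]
end

section
/- (Stationary states of the finite Markov chains) Assume T^{[N]} admits a positive bidiagonal factorization, let λ_1 be its largest eigenvalue, and assume λ_1 is a simple zero of B_{N+1}, B_n(λ_1) > 0 for all 0 ≤ n ≤ N, and B^{[n]}_{N+1}(λ_1) > 0 for all 1 ≤ n ≤ N+1 (these hold for oscillatory matrices). Define the diagonal matrix π̃_{II} := diag(1/B_0(λ_1), …, 1/B_N(λ_1)) and the matrices P̃_{II} := π̃_{II}·(T^{[N]}/λ_1)·π̃_{II}^{−1} and P̃_I := π̃_I^{−1}·((T^{[N]})ᵀ/λ_1)·π̃_I, where π̃_I := diag(B^{[1]}_{N+1}(λ_1)/B^{[1]}_{N+1}(λ_1), B^{[2]}_{N+1}(λ_1)/B^{[1]}_{N+1}(λ_1), …, B^{[N+1]}_{N+1}(λ_1)/B^{[1]}_{N+1}(λ_1)). Then the row vector π with entries π_n := B^{[n]}_{N+1}(λ_1)·B_{n−1}(λ_1)/B'_{N+1}(λ_1), n = 1,…,N+1, satisfies π·P̃_{II} = π and π·P̃_I = π, each π_n > 0, and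 Σ_{n=1}^{N+1} π_n = 1. -/
open Polynomial

noncomputable def piStat (T : ℕ → ℕ → ℝ) (B : ℕ → Polynomial ℝ) (N : ℕ) (lam1 : ℝ) :
    Fin (N + 1) → ℝ :=
  fun n => Polynomial.eval lam1 (Btr T N ((n : ℕ) + 1)) * Polynomial.eval lam1 (B (n : ℕ)) /
    Polynomial.eval lam1 (Polynomial.derivative (B (N + 1)))

noncomputable def PtildeII (T : ℕ → ℕ → ℝ) (B : ℕ → Polynomial ℝ) (N : ℕ) (lam1 : ℝ) :
    Matrix (Fin (N + 1)) (Fin (N + 1)) ℝ :=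
  (Matrix.diagonal fun i : Fin (N + 1) => 1 / Polynomial.eval lam1 (B (i : ℕ))) *
    (lam1⁻¹ • truncM T N) *
    (Matrix.diagonal fun i : Fin (N + 1) => 1 / Polynomial.eval lam1 (B (i : ℕ)))⁻¹

noncomputable def PtildeI (T : ℕ → ℕ → ℝ) (N : ℕ) (lam1 : ℝ) :
    Matrix (Fin (N + 1)) (Fin (N + 1)) ℝ :=
  (Matrix.diagonal fun i : Fin (N + 1) =>
      Polynomial.eval lam1 (Btr T N ((i : ℕ) + 1)) / Polynomial.eval lam1 (Btr T N 1))⁻¹ *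
    (lam1⁻¹ • Matrix.transpose (truncM T N)) *
    (Matrix.diagonal fun i : Fin (N + 1) =>
      Polynomial.eval lam1 (Btr T N ((i : ℕ) + 1)) / Polynomial.eval lam1 (Btr T N 1))

/-- The determinant of the `s × s` diagonal block of `A` starting at index `k`. -/
noncomputable def blockDet (A : ℕ → ℕ → ℝ) (k s : ℕ) : ℝ :=
  (Matrix.of fun i j : Fin s => A (k + i) (k + j)).det

theorem blockDet_zero (A : ℕ → ℕ → ℝ) (k : ℕ) : blockDet A k 0 = 1 := by
  simp [blockDet]

/-- First column expansion for a lower Hessenberg matrix with superdiagonal entries `-1`. -/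
theorem blockDet_succ (A : ℕ → ℕ → ℝ) (h1 : ∀ n, A n (n + 1) = -1)
    (h0 : ∀ n m, n + 1 < m → A n m = 0) (s k : ℕ) :
    blockDet A k (s + 1) =
      ∑ i ∈ Finset.range (s + 1), A (k + i) k * blockDet A (k + i + 1) (s - i) := by
  induction s using Nat.strong_induction_on generalizing k with
  | _ s ih =>
  set c := ∑ i ∈ Finset.range (s + 1), A (k + i) k * blockDet A (k + i + 1) (s - i) with hc
  set M : Matrix (Fin (s + 1)) (Fin (s + 1)) ℝ := Matrix.of fun i j => A (k + i) (k + j) with hM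
  set v : Fin (s + 1) → ℝ := fun i => blockDet A (k + i + 1) (s - i) with hv
  have hrow : ∑ i, v i • M i = Pi.single 0 c := by
    ext j
    simp only [Finset.sum_apply, Pi.smul_apply, smul_eq_mul, hv, hM, Matrix.of_apply]
    rw [Fin.sum_univ_eq_sum_range
      (fun i => blockDet A (k + i + 1) (s - i) * A (k + i) (k + j)) (s + 1)]
    obtain ⟨j, hj⟩ := j
    rcases j with _ | m
    · simp [hc, mul_comm]
    · have hne : (⟨m + 1, hj⟩ : Fin (s + 1)) ≠ 0 := by simp [Fin.ext_iff]
      rw [Pi.single_eq_of_ne hne]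
      obtain ⟨t, rfl⟩ : ∃ t, s = m + 1 + t := ⟨s - (m + 1), by omega⟩
      dsimp only
      rw [show m + 1 + t + 1 = m + (1 + (t + 1)) by ring, Finset.sum_range_add,
        Finset.sum_range_add, Finset.sum_eq_zero]
      · have := ih t (by omega) (k + m + 1)
        simp only [Finset.sum_range_one, add_zero]
        rw [show m + 1 + t - m = t + 1 by omega, this, show k + (m + 1) = k + m + 1 by ring, h1,
          zero_add, mul_neg_one, neg_add_eq_zero]
        refine Finset.sum_congr rfl fun i _ => ?_
        rw [mul_comm, show k + (m + (1 + i)) = k + m + 1 + i by ring,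
          show m + 1 + t - (m + (1 + i)) = t - i by omega]
      · intro i hi
        rw [h0 _ _ (by have := Finset.mem_range.1 hi; omega), mul_zero]
  have hdet := Matrix.det_updateRow_sum M (Fin.last s) v
  rw [hrow, show v (Fin.last s) = 1 by simp [hv, blockDet_zero], one_smul] at hdet
  change M.det = c
  rw [← hdet, Matrix.det_succ_row _ (Fin.last s), Finset.sum_eq_single 0]
  · have htri : ((M.updateRow (Fin.last s) (Pi.single 0 c)).submatrix
        (Fin.last s).succAbove (Fin.succAbove 0)).det = (-1) ^ s := by
      rw [Matrix.det_of_isLowerTriangular]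
      · simp [hM, ← add_assoc, h1]
      · intro i j hij
        have hij : i < j := hij
        simp [hM]
        exact h0 _ _ (by have := Fin.lt_def.1 hij; omega)
    rw [htri]
    simp [mul_right_comm, ← mul_pow]
  · intro j _ hj
    simp [hj]
  · simp

theorem eval_Btr (T : ℕ → ℕ → ℝ) (N k : ℕ) (hk : k ≤ N + 1) (x : ℝ) :
    eval x (Btr T N k) = blockDet (fun n m => (if n = m then x else 0) - T n m) k (N + 1 - k) := by
  rw [Btr, if_pos hk, Matrix.eval_charpoly, blockDet]
  congr 1
  ext i j
  simp [Matrix.diagonal_apply, Fin.ext_iff]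

/-- The values `eval x (Btr T N (n + 1))` form a left eigenvector of the truncation of `T`, up to
a defect in the first entry. -/
theorem sum_eval_Btr_mul (T : ℕ → ℕ → ℝ) (hT1 : ∀ n, T n (n + 1) = 1)
    (hTsup : ∀ n m, n + 1 < m → T n m = 0) (N : ℕ) (x : ℝ) (j : ℕ) (hj : j ≤ N) :
    ∑ n ∈ Finset.range (N + 1), eval x (Btr T N (n + 1)) * T n j =
      x * eval x (Btr T N (j + 1)) - if j = 0 then eval x (Btr T N 0) else 0 := by
  obtain ⟨s, rfl⟩ : ∃ s, N = j + s := ⟨N - j, by omega⟩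
  have key : eval x (Btr T (j + s) j) = x * eval x (Btr T (j + s) (j + 1)) -
      ∑ i ∈ Finset.range (s + 1), eval x (Btr T (j + s) (j + i + 1)) * T (j + i) j := by
    rw [eval_Btr _ _ _ (by omega), show j + s + 1 - j = s + 1 by omega, blockDet_succ]
    · have : ∀ i ∈ Finset.range (s + 1),
          ((if j + i = j then x else 0) - T (j + i) j) *
            blockDet (fun n m => (if n = m then x else 0) - T n m) (j + i + 1) (s - i) =
          (if i = 0 then x * eval x (Btr T (j + s) (j + 1)) else 0) -
            eval x (Btr T (j + s) (j + i + 1)) * T (j + i) j := by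
        intro i hi
        have hi := Finset.mem_range.1 hi
        rw [eval_Btr _ _ (j + i + 1) (by omega), show j + s + 1 - (j + i + 1) = s - i by omega]
        rcases i with _ | i
        · rw [eval_Btr _ _ (j + 1) (by omega), show j + s + 1 - (j + 1) = s by omega]
          simp
          ring
        · simp
          ring
      rw [Finset.sum_congr rfl this, Finset.sum_sub_distrib]
      simp
    · intro n
      simp [hT1]
    · intro n m hnm
      simp [hTsup n m hnm, show n ≠ m by omega]
  rw [add_assoc, Finset.sum_range_add]
  rcases j with _ | j
  · simp at key ⊢
    linarith
  · rw [Finset.sum_range_succ, Finset.sum_eq_zero, hT1, if_neg (by omega)]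
    · simp only [add_assoc] at key ⊢
      linarith
    · intro n hn
      rw [hTsup n _ (by have := Finset.mem_range.1 hn; omega), mul_zero]

/-- The recursion, written as a row of the eigenvalue equation. -/
theorem sum_mul_recursion (p : ℕ) (T : ℕ → ℕ → ℝ) (hT1 : ∀ n, T n (n + 1) = 1)
    (hTsup : ∀ n m, n + 1 < m → T n m = 0) (hTsub : ∀ n m, m + p < n → T n m = 0)
    (B : ℕ → Polynomial ℝ)
    (hBrec : ∀ n, B (n + 1) = (X - C (T n n)) * B n
      - ∑ j ∈ Finset.Icc 1 p, (if j ≤ n then C (T n (n - j)) * B (n - j) else 0))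
    (N n : ℕ) (hn : n ≤ N) :
    ∑ j ∈ Finset.range (N + 2), C (T n j) * B j = X * B n := by
  have hlow : ∑ j ∈ Finset.Icc 1 p, (if j ≤ n then C (T n (n - j)) * B (n - j) else 0) =
      ∑ j ∈ Finset.range n, C (T n j) * B j := by
    rw [← Finset.sum_filter]
    have hsub : (Finset.range n).filter (fun j => n ≤ j + p) ⊆ Finset.range n :=
      Finset.filter_subset _ _
    rw [← Finset.sum_subset hsub]
    · refine Finset.sum_nbij' (fun j => n - j) (fun j => n - j) ?_ ?_ ?_ ?_ ?_ <;>
        simp <;> intros <;> omega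
    · intro j hj hj'
      simp only [Finset.mem_filter, hj, true_and, not_le] at hj'
      simp [hTsub n j hj']
  have hup : ∑ j ∈ Finset.range (N + 2), C (T n j) * B j =
      ∑ j ∈ Finset.range (n + 2), C (T n j) * B j := by
    symm
    apply Finset.sum_subset
    · intro j
      simp only [Finset.mem_range]
      omega
    · intro j _ hj
      simp only [Finset.mem_range] at hj
      simp [hTsup n j (by omega)]
  rw [hup, Finset.sum_range_succ, Finset.sum_range_succ, hT1, hBrec n, hlow]
  simp
  ring

/-- A Christoffel–Darboux formula for the recursion polynomials and the truncated polynomials. -/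
theorem sub_mul_sum_Btr_mul (p : ℕ) (T : ℕ → ℕ → ℝ) (hT1 : ∀ n, T n (n + 1) = 1)
    (hTsup : ∀ n m, n + 1 < m → T n m = 0) (hTsub : ∀ n m, m + p < n → T n m = 0)
    (B : ℕ → Polynomial ℝ) (hB0 : B 0 = 1)
    (hBrec : ∀ n, B (n + 1) = (X - C (T n n)) * B n
      - ∑ j ∈ Finset.Icc 1 p, (if j ≤ n then C (T n (n - j)) * B (n - j) else 0))
    (N : ℕ) (x : ℝ) :
    (X - C x) * ∑ n ∈ Finset.range (N + 1), C (eval x (Btr T N (n + 1))) * B n =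
      B (N + 1) - C (eval x (Btr T N 0)) := by
  set d : ℕ → ℝ := fun k => eval x (Btr T N k) with hd
  have hlast : d (N + 1) = 1 := by
    simp only [hd]
    rw [eval_Btr _ _ _ le_rfl, Nat.sub_self, blockDet_zero]
  have hcol : ∀ j ∈ Finset.range (N + 1),
      ∑ n ∈ Finset.range (N + 1), C (d (n + 1)) * (C (T n j) * B j) =
        C x * (C (d (j + 1)) * B j) - if j = 0 then C (d 0) else 0 := by
    intro j hj
    have h := sum_eval_Btr_mul T hT1 hTsup N x j (by have := Finset.mem_range.1 hj; omega)
    simp only [← mul_assoc, ← C_mul, ← Finset.sum_mul, ← map_sum]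
    rw [h]
    split_ifs with h0
    · subst h0
      simp [hB0, hd]
    · simp [hd]
  have hcolN : ∑ n ∈ Finset.range (N + 1), C (d (n + 1)) * (C (T n (N + 1)) * B (N + 1)) =
      B (N + 1) := by
    rw [Finset.sum_range_succ, Finset.sum_eq_zero, hT1, hlast]
    · simp
    · intro n hn
      simp [hTsup n (N + 1) (by have := Finset.mem_range.1 hn; omega)]
  have htotal : ∑ n ∈ Finset.range (N + 1), C (d (n + 1)) * (X * B n) =
      C x * ∑ n ∈ Finset.range (N + 1), C (d (n + 1)) * B n - C (d 0) + B (N + 1) := by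
    calc _ = ∑ n ∈ Finset.range (N + 1), ∑ j ∈ Finset.range (N + 2),
          C (d (n + 1)) * (C (T n j) * B j) := by
          refine Finset.sum_congr rfl fun n hn => ?_
          rw [← Finset.mul_sum, sum_mul_recursion p T hT1 hTsup hTsub B hBrec N n
            (by have := Finset.mem_range.1 hn; omega)]
      _ = _ := by
          rw [Finset.sum_comm, Finset.sum_range_succ, hcolN, Finset.sum_congr rfl hcol,
            Finset.sum_sub_distrib, ← Finset.mul_sum]
          simp
  rw [sub_mul, Finset.mul_sum]
  simp only [mul_left_comm X]
  rw [htotal]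
  ring

theorem det_Lmat (p sz k : ℕ) (α : ℕ → ℝ) : (Lmat p sz k α).det = 1 := by
  rw [Matrix.det_of_isLowerTriangular]
  · simp [Lmat]
  · intro i j hij
    have hij : i < j := hij
    have := Fin.lt_def.1 hij
    simp [Lmat, show (i : ℕ) ≠ j by omega, show (i : ℕ) ≠ j + 1 by omega]

theorem det_Umat (p sz : ℕ) (α : ℕ → ℝ) :
    (Umat p sz α).det = ∏ i : Fin sz, α (1 + (i : ℕ) * (p + 1)) := by
  rw [Matrix.det_of_isUpperTriangular]
  · simp [Umat]
  · intro i j hij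
    have hij : j < i := hij
    have := Fin.lt_def.1 hij
    simp [Umat, show (i : ℕ) ≠ j by omega, show (j : ℕ) ≠ i + 1 by omega]

theorem det_bidiagonal_product_pos (p sz : ℕ) (α : ℕ → ℝ) (hα : ∀ i, 1 ≤ i → 0 < α i) :
    0 < ((((List.range p).map fun k => Lmat p sz (k + 1) α).prod) * Umat p sz α).det := by
  have hL : (((List.range p).map fun k => Lmat p sz (k + 1) α).prod).det = 1 := by
    rw [← Matrix.coe_detMonoidHom, map_list_prod, List.map_map]
    apply List.prod_eq_one
    simp [det_Lmat]
  rw [Matrix.det_mul, hL, one_mul, det_Umat]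
  exact Finset.prod_pos fun i _ => hα _ (by omega)

theorem stmt_19
    (p : ℕ) (hp : 1 ≤ p)
    (T : ℕ → ℕ → ℝ)
    (hT1 : ∀ n, T n (n + 1) = 1)
    (hTsup : ∀ n m, n + 1 < m → T n m = 0)
    (hTsub : ∀ n m, m + p < n → T n m = 0)
    (hTlow : ∀ n, p ≤ n → T n (n - p) ≠ 0)
    (B : ℕ → Polynomial ℝ)
    (hB0 : B 0 = 1)
    (hBrec : ∀ n, B (n + 1) = (X - C (T n n)) * B n
      - ∑ j ∈ Finset.Icc 1 p, (if j ≤ n then C (T n (n - j)) * B (n - j) else 0))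
    (N : ℕ) (α : ℕ → ℝ) (hα : ∀ i, 1 ≤ i → 0 < α i)
    (hfact : truncM T N =
      (((List.range p).map fun k => Lmat p (N + 1) (k + 1) α).prod) * Umat p (N + 1) α)
    (lam1 : ℝ)
    (hroot : eval lam1 (B (N + 1)) = 0)
    (hmax : ∀ z : ℝ, eval z (B (N + 1)) = 0 → z ≤ lam1)
    (hsimple : eval lam1 (derivative (B (N + 1))) ≠ 0)
    (hBpos : ∀ n : ℕ, n ≤ N → 0 < eval lam1 (B n))
    (hBtrpos : ∀ n : ℕ, 1 ≤ n → n ≤ N + 1 → 0 < eval lam1 (Btr T N n)) :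
    Matrix.vecMul (piStat T B N lam1) (PtildeII T B N lam1) = piStat T B N lam1 ∧
    Matrix.vecMul (piStat T B N lam1) (PtildeI T N lam1) = piStat T B N lam1 ∧
    (∀ n : Fin (N + 1), 0 < piStat T B N lam1 n) ∧
    (∑ n : Fin (N + 1), piStat T B N lam1 n = 1) := by
  have hCD := sub_mul_sum_Btr_mul p T hT1 hTsup hTsub B hB0 hBrec N lam1
  have hzero : eval lam1 (Btr T N 0) = 0 := by
    have h := congrArg (eval lam1) hCD
    simp [hroot] at h
    exact h
  have hderiv : ∑ n ∈ Finset.range (N + 1), eval lam1 (Btr T N (n + 1)) * eval lam1 (B n) =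
      eval lam1 (derivative (B (N + 1))) := by
    have h := congrArg (fun q => eval lam1 (derivative q)) hCD
    simpa [eval_finsetSum] using h
  have hleft : ∀ j : Fin (N + 1),
      ∑ n : Fin (N + 1), eval lam1 (Btr T N (n + 1)) * T n j =
        lam1 * eval lam1 (Btr T N (j + 1)) := by
    intro j
    rw [Fin.sum_univ_eq_sum_range (fun n => eval lam1 (Btr T N (n + 1)) * T n j) (N + 1),
      sum_eval_Btr_mul T hT1 hTsup N lam1 j (by omega), hzero]
    simp
  have hright : ∀ n : Fin (N + 1),
      ∑ j : Fin (N + 1), T n j * eval lam1 (B j) = lam1 * eval lam1 (B n) := by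
    intro n
    have h := congrArg (eval lam1)
      (sum_mul_recursion p T hT1 hTsup hTsub B hBrec N n (by omega))
    rw [Finset.sum_range_succ] at h
    rw [Fin.sum_univ_eq_sum_range (fun j => T n j * eval lam1 (B j)) (N + 1)]
    simpa [eval_finsetSum, hroot] using h
  have hb : ∀ n : Fin (N + 1), 0 < eval lam1 (B n) := fun n => hBpos n (by omega)
  have hw : ∀ n : Fin (N + 1), 0 < eval lam1 (Btr T N (n + 1)) :=
    fun n => hBtrpos _ (by omega) (by omega)
  have hw1 : eval lam1 (Btr T N 1) ≠ 0 := (hBtrpos 1 le_rfl (by omega)).ne'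
  have hlam : lam1 ≠ 0 := by
    intro h
    have hdet : (truncM T N).det ≠ 0 := by
      rw [hfact]
      exact (det_bidiagonal_product_pos p (N + 1) α hα).ne'
    refine hdet (Matrix.exists_mulVec_eq_zero_iff.1
      ⟨fun n => eval lam1 (B n), fun h0 => (hb 0).ne' (congrFun h0 0), ?_⟩)
    ext n
    simpa [Matrix.mulVec, dotProduct, truncM, h] using hright n
  have hderiv_pos : 0 < eval lam1 (derivative (B (N + 1))) := by
    rw [← hderiv]
    exact Finset.sum_pos (fun n hn => by
      have := Finset.mem_range.1 hn
      exact mul_pos (hBtrpos _ (by omega) (by omega)) (hBpos _ (by omega))) (by simp)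
  have hdiag_inv : ∀ f : Fin (N + 1) → ℝ, (∀ i, f i ≠ 0) →
      (Matrix.diagonal f)⁻¹ = Matrix.diagonal fun i => (f i)⁻¹ := by
    intro f hf
    apply Matrix.inv_eq_right_inv
    rw [Matrix.diagonal_mul_diagonal, ← Matrix.diagonal_one]
    congr 1
    ext i
    exact mul_inv_cancel₀ (hf i)
  refine ⟨?_, ?_, fun n => div_pos (mul_pos (hw n) (hb n)) hderiv_pos, ?_⟩
  · rw [PtildeII, hdiag_inv _ fun i => one_div_ne_zero (hb i).ne']
    ext m
    simp only [Matrix.vecMul, dotProduct, Matrix.mul_diagonal, Matrix.diagonal_mul,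
      Matrix.smul_apply, smul_eq_mul, truncM, Matrix.of_apply, piStat]
    have hterm : ∀ n : Fin (N + 1),
        eval lam1 (Btr T N (n + 1)) * eval lam1 (B n) / eval lam1 (derivative (B (N + 1))) *
          (1 / eval lam1 (B n) * (lam1⁻¹ * T n m) * (1 / eval lam1 (B m))⁻¹) =
        (eval lam1 (Btr T N (n + 1)) * T n m) *
          (eval lam1 (B m) * lam1⁻¹ / eval lam1 (derivative (B (N + 1)))) := by
      intro n
      have := (hb n).ne'
      have := (hb m).ne'
      field_simp
    rw [Finset.sum_congr rfl fun n _ => hterm n, ← Finset.sum_mul, hleft]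
    field_simp
  · rw [PtildeI, hdiag_inv _ fun i => div_ne_zero (hw i).ne' hw1]
    ext m
    simp only [Matrix.vecMul, dotProduct, Matrix.mul_diagonal, Matrix.diagonal_mul,
      Matrix.smul_apply, smul_eq_mul, truncM, Matrix.of_apply, Matrix.transpose_apply, piStat]
    have hterm : ∀ n : Fin (N + 1),
        eval lam1 (Btr T N (n + 1)) * eval lam1 (B n) / eval lam1 (derivative (B (N + 1))) *
          ((eval lam1 (Btr T N (n + 1)) / eval lam1 (Btr T N 1))⁻¹ * (lam1⁻¹ * T m n) *
            (eval lam1 (Btr T N (m + 1)) / eval lam1 (Btr T N 1))) =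
        (T m n * eval lam1 (B n)) *
          (eval lam1 (Btr T N (m + 1)) * lam1⁻¹ / eval lam1 (derivative (B (N + 1)))) := by
      intro n
      have := (hw n).ne'
      field_simp
    rw [Finset.sum_congr rfl fun n _ => hterm n, ← Finset.sum_mul, hright]
    field_simp
  · simp only [piStat]
    rw [← Finset.sum_div, Fin.sum_univ_eq_sum_range
      (fun n => eval lam1 (Btr T N (n + 1)) * eval lam1 (B n)) (N + 1), hderiv]
    exact div_self hsimple
end
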